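/- arXiv:nlin/0610065 — 5 statements merged into one kernel-verified Lean document; each statement's English description precedes it below -/
import Mathlib

section
/- Let n ≥ 4 be an integer and a, b ∈ ℂ with a ≠ 0. If a second order operator T with components p, q, r on ℂ∖{b} preserves ℰ^{a,b}ₙ, then p agrees with a polynomial of degree at most 4. Moreover, T preserves ℰ^{a,b}ₙ if and only if T is a linear combination of the following seven linearly independent operators: J₁ = (z−b)⁴D_zz − 2(n−1)(z−b)³D_z + n(n−1)(z−b)²; J₂ = (z−b)³D_zz − (n−1)(z−b)²D_z; J₃ = (z−b)²D_zz; J₄ = (z−b)D_zz + (a(z−b) − 1)D_z; J₅ = D_zz + 2(a − 1/(z−b))·D_z − 2a/(z−b); J₆ = (z−b)(z−b−n/a)·D_z − n·(z−b); J₇ = 1. -/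
/-!
Put `x = z - b`. The space `ℰ^{a,b}ₙ` has the basis `1 - a x, x², …, xⁿ`.

If `T` preserves it, then the polynomials `T[x²]`, `T[x³]`, `T[x⁴]` determine `p, q, r` and show
that `x²p`, `x³q`, `x⁴r` are polynomials `A, B, R` in `x`. Hence `T` splits into homogeneous parts:
`x⁴ T[xᵏ] = xᵏ ∑ₘ tₘ(k) xᵐ`, where `tₘ(k) = k(k-1)Aₘ + kBₘ + Rₘ` is a polynomial in `k` of degree
at most two. That `T[xᵏ]` has no pole, has degree at most `n`, and satisfies the condition at `b`,
is a list of linear conditions on the `tₘ(k)` (`monomial_conditions`). For `m ≥ 7` the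
polynomial `tₘ` vanishes at `n, n-1, n-2`, so it is zero. For `m = 0, 1` it is zero as well, and
the remaining conditions leave exactly the seven parameters of `∑ cᵢ Jᵢ` (`components_at_zero`,
`components_of_preserves`). In particular `p = c₁x⁴ + c₂x³ + c₃x² + c₄x + c₅`.

Conversely, preservation can be tested on the basis (`preserves_of_basis`), where each `Jᵢ` is
computed explicitly (`Jop_basis_zero_mem`, `Jop_basis_pow_mem`). Linear independence follows by
evaluating a combination on `1, x, x²`.
-/

open Polynomial

noncomputable section

/-- Action of the second order differential operator with components `p, q, r`
on (the evaluation of) a polynomial `f`:  `T[f](z) = p(z)·f″(z) + q(z)·f′(z) + r(z)·f(z)`. -/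
def SOApply (p q r : ℂ → ℂ) (f : Polynomial ℂ) (z : ℂ) : ℂ :=
  p z * (Polynomial.derivative (Polynomial.derivative f)).eval z
    + q z * (Polynomial.derivative f).eval z + r z * f.eval z

/-- `T` (with components `p, q, r`) preserves the set of polynomials `M` on the domain `D`:
for every `f ∈ M`, `T[f]` agrees on `D` with some polynomial belonging to `M`. -/
def SOPreserves (p q r : ℂ → ℂ) (D : Set ℂ) (M : Set (Polynomial ℂ)) : Prop :=
  ∀ f ∈ M, ∃ g ∈ M, ∀ z ∈ D, SOApply p q r f z = g.eval z

/-- `𝒫ₙ`: polynomials of degree at most `n`. -/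
def Pn (n : ℕ) : Set (Polynomial ℂ) := {f | f.degree ≤ (n : ℕ)}

/-- The potential invariant `v = r − q′/2 + p″/4 − (q − p′)²/(4p) + p′²/(16p)`. -/
def potentialInv (p q r : ℂ → ℂ) (z : ℂ) : ℂ :=
  r z - deriv q z / 2 + deriv (deriv p) z / 4
    - (q z - deriv p z) ^ 2 / (4 * p z) + (deriv p z) ^ 2 / (16 * p z)

/-- First component `p̂(w) = w⁴·p(−1/w)` of the inversion of `T`. -/
def invP (p : ℂ → ℂ) (w : ℂ) : ℂ := w ^ 4 * p (-1 / w)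

/-- Second component `q̂(w) = w²·q(−1/w) − 2(n−1)·w³·p(−1/w)` of the inversion of `T`. -/
def invQ (n : ℕ) (p q : ℂ → ℂ) (w : ℂ) : ℂ :=
  w ^ 2 * q (-1 / w) - 2 * ((n : ℂ) - 1) * w ^ 3 * p (-1 / w)

/-- Third component `r̂(w) = r(−1/w) − n·w·q(−1/w) + n(n−1)·w²·p(−1/w)` of the inversion. -/
def invR (n : ℕ) (p q r : ℂ → ℂ) (w : ℂ) : ℂ :=
  r (-1 / w) - (n : ℂ) * w * q (-1 / w) + (n : ℂ) * ((n : ℂ) - 1) * w ^ 2 * p (-1 / w)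

/-- `ℰ^{a,b}`: polynomials `f` with `f′(b) + a·f(b) = 0`. -/
def Eab (a b : ℂ) : Set (Polynomial ℂ) :=
  {f | (Polynomial.derivative f).eval b + a * f.eval b = 0}

/-- `ℰ^{a,b}ₙ = ℰ^{a,b} ∩ 𝒫ₙ`. -/
def EabN (a b : ℂ) (n : ℕ) : Set (Polynomial ℂ) := Eab a b ∩ Pn n

/-- `ℰₙ`: the span of `{1, z², z³, …, zⁿ}`. -/
def En (n : ℕ) : Set (Polynomial ℂ) :=
  (Submodule.span ℂ ((fun k => (X : Polynomial ℂ) ^ k) '' ({0} ∪ Set.Icc 2 n)) :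
    Set (Polynomial ℂ))

/-- `Êₙᵃ`: the span of `{1, z, …, z^{n−2}, zⁿ − a·z^{n−1}}`. -/
def EhatN (n : ℕ) (a : ℂ) : Set (Polynomial ℂ) :=
  (Submodule.span ℂ ({(X : Polynomial ℂ) ^ n - C a * X ^ (n - 1)} ∪
      ((fun k => (X : Polynomial ℂ) ^ k) '' Set.Iic (n - 2))) : Set (Polynomial ℂ))

/-- The seven operators `J₁, …, J₇` (indexed by `Fin 7`), acting on polynomials. -/
def Jop (n : ℕ) (a b : ℂ) : Fin 7 → Polynomial ℂ → ℂ → ℂ :=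
  ![fun f z => (z - b) ^ 4 * (Polynomial.derivative (Polynomial.derivative f)).eval z
      - 2 * ((n : ℂ) - 1) * (z - b) ^ 3 * (Polynomial.derivative f).eval z
      + (n : ℂ) * ((n : ℂ) - 1) * (z - b) ^ 2 * f.eval z,
    fun f z => (z - b) ^ 3 * (Polynomial.derivative (Polynomial.derivative f)).eval z
      - ((n : ℂ) - 1) * (z - b) ^ 2 * (Polynomial.derivative f).eval z,
    fun f z => (z - b) ^ 2 * (Polynomial.derivative (Polynomial.derivative f)).eval z,
    fun f z => (z - b) * (Polynomial.derivative (Polynomial.derivative f)).eval z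
      + (a * (z - b) - 1) * (Polynomial.derivative f).eval z,
    fun f z => (Polynomial.derivative (Polynomial.derivative f)).eval z
      + 2 * (a - 1 / (z - b)) * (Polynomial.derivative f).eval z
      - 2 * a / (z - b) * f.eval z,
    fun f z => (z - b) * (z - b - (n : ℂ) / a) * (Polynomial.derivative f).eval z
      - (n : ℂ) * (z - b) * f.eval z,
    fun f z => f.eval z]

/-! ### Homogeneous parts at `b = 0` -/

/-- If `x²p, x³q, x⁴r` are the polynomials `A, B, R` and `T[xᵏ] = G`, then
`x⁴ G = xᵏ ∑ₘ tₘ(k) xᵐ` with `tₘ(k) = k(k-1)Aₘ + kBₘ + Rₘ`. The conclusion collects the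
conditions on `tₘ(k)` expressing that `G` is a polynomial of degree at most `n` lying in
`ℰ^{a,0}`. -/
lemma monomial_conditions {n k : ℕ} {a : ℂ} {A B R G : ℂ[X]} (hG : G.natDegree ≤ n)
    (hGa : G.coeff 1 + a * G.coeff 0 = 0)
    (h : X ^ 4 * G = X ^ k * (C ((k : ℂ) * (k - 1)) * A + C (k : ℂ) * B + R)) :
    (∀ m, n + 4 < m + k → (k : ℂ) * (k - 1) * A.coeff m + k * B.coeff m + R.coeff m = 0) ∧
    (∀ m, m + k < 4 → (k : ℂ) * (k - 1) * A.coeff m + k * B.coeff m + R.coeff m = 0) ∧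
    (∀ m, m + k = 4 → ((k : ℂ) * (k - 1) * A.coeff (m + 1) + k * B.coeff (m + 1)
        + R.coeff (m + 1))
      + a * ((k : ℂ) * (k - 1) * A.coeff m + k * B.coeff m + R.coeff m) = 0) := by
  have key : ∀ m, (X ^ 4 * G).coeff (m + k) =
      (k : ℂ) * (k - 1) * A.coeff m + k * B.coeff m + R.coeff m := by
    intro m
    rw [h, coeff_X_pow_mul, coeff_add, coeff_add, coeff_C_mul, coeff_C_mul]
  refine ⟨fun m hm => ?_, fun m hm => ?_, fun m hm => ?_⟩
  · rw [← key, coeff_X_pow_mul', if_pos (by omega)]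
    exact coeff_eq_zero_of_natDegree_lt (by omega)
  · rw [← key, coeff_X_pow_mul', if_neg (by omega)]
  · rw [← key, ← key, show m + 1 + k = 1 + 4 by omega, show m + k = 0 + 4 by omega,
      coeff_X_pow_mul, coeff_X_pow_mul, hGa]

lemma eq_of_eval_eq_off_zero {F G : ℂ[X]} (h : ∀ x : ℂ, x ≠ 0 → F.eval x = G.eval x) :
    F = G := by
  apply eq_of_infinite_eval_eq
  exact (Set.infinite_of_finite_compl (s := {x : ℂ | x ≠ 0})
    (by simp [Set.compl_def])).mono fun x hx => h x hx

/-- A second order operator preserving `ℰ^{a,0}ₙ` has the components of a combination of the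
seven operators with `b = 0`. Only the action on the basis `1 - a x, x², …, xⁿ` is used. -/
lemma components_at_zero {n : ℕ} (hn : 4 ≤ n) {a : ℂ} (ha : a ≠ 0) {p q r : ℂ → ℂ}
    (h0 : ∃ G : ℂ[X], G.coeff 1 + a * G.coeff 0 = 0 ∧
      ∀ x : ℂ, x ≠ 0 → -a * q x + r x * (1 - a * x) = G.eval x)
    (hk : ∀ k : ℕ, 2 ≤ k → k ≤ n → ∃ G : ℂ[X], G.natDegree ≤ n ∧
      G.coeff 1 + a * G.coeff 0 = 0 ∧ ∀ x : ℂ, x ≠ 0 →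
        p x * (k * (k - 1) * x ^ (k - 2)) + q x * (k * x ^ (k - 1)) + r x * x ^ k = G.eval x) :
    ∃ c1 c2 c3 c4 c5 c6 c7 : ℂ, ∀ x : ℂ, x ≠ 0 →
      p x = c1 * x ^ 4 + c2 * x ^ 3 + c3 * x ^ 2 + c4 * x + c5 ∧
      q x = -2 * (n - 1) * c1 * x ^ 3 - (n - 1) * c2 * x ^ 2 + c4 * (a * x - 1)
        + c5 * (2 * (a - 1 / x)) + c6 * (x * (x - n / a)) ∧
      r x = n * (n - 1) * c1 * x ^ 2 - c5 * (2 * a / x) - c6 * (n * x) + c7 := by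
  -- `T[x⁴] - 2x T[x³] + x² T[x²] = 2x² p`, and similarly for `q` and `r`.
  obtain ⟨A, B, R, hABR⟩ : ∃ A B R : ℂ[X], ∀ x : ℂ, x ≠ 0 →
      x ^ 2 * p x = A.eval x ∧ x ^ 3 * q x = B.eval x ∧ x ^ 4 * r x = R.eval x := by
    obtain ⟨g2, -, -, h2⟩ := hk 2 (by omega) (by omega)
    obtain ⟨g3, -, -, h3⟩ := hk 3 (by omega) (by omega)
    obtain ⟨g4, -, -, h4⟩ := hk 4 (by omega) (by omega)
    refine ⟨C (1 / 2) * (g4 - 2 * X * g3 + X ^ 2 * g2),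
      -2 * g4 + 5 * X * g3 - 3 * X ^ 2 * g2,
      X ^ 2 * g2 - (g4 - 2 * X * g3 + X ^ 2 * g2)
        - 2 * (-2 * g4 + 5 * X * g3 - 3 * X ^ 2 * g2), fun x hx => ?_⟩
    have e2 := h2 x hx
    have e3 := h3 x hx
    have e4 := h4 x hx
    norm_num at e2 e3 e4
    simp only [eval_mul, eval_add, eval_sub, eval_neg, eval_C, eval_X, eval_pow, eval_ofNat]
    rw [← e2, ← e3, ← e4]
    refine ⟨?_, ?_, ?_⟩ <;> ring
  have hcond : ∀ k : ℕ, 2 ≤ k → k ≤ n →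
      (∀ m, n + 4 < m + k → (k : ℂ) * (k - 1) * A.coeff m + k * B.coeff m + R.coeff m = 0) ∧
      (∀ m, m + k < 4 → (k : ℂ) * (k - 1) * A.coeff m + k * B.coeff m + R.coeff m = 0) ∧
      (∀ m, m + k = 4 → ((k : ℂ) * (k - 1) * A.coeff (m + 1) + k * B.coeff (m + 1)
          + R.coeff (m + 1))
        + a * ((k : ℂ) * (k - 1) * A.coeff m + k * B.coeff m + R.coeff m) = 0) := by
    intro k hk2 hkn
    obtain ⟨G, hG, hGa, hGe⟩ := hk k hk2 hkn
    refine monomial_conditions hG hGa (eq_of_eval_eq_off_zero fun x hx => ?_)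
    obtain ⟨hA, hB, hR⟩ := hABR x hx
    obtain ⟨j, rfl⟩ := Nat.exists_eq_add_of_le' hk2
    simp only [eval_mul, eval_add, eval_C, eval_X, eval_pow]
    rw [← hGe x hx, ← hA, ← hB, ← hR, show j + 2 - 2 = j by omega,
      show j + 2 - 1 = j + 1 by omega]
    ring
  obtain ⟨G, hGa, hGe⟩ := h0
  have hG : X ^ 4 * G = R - C a * (X * (B + R)) := by
    refine eq_of_eval_eq_off_zero fun x hx => ?_
    obtain ⟨hA, hB, hR⟩ := hABR x hx
    simp only [eval_mul, eval_add, eval_sub, eval_C, eval_X, eval_pow]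
    rw [← hGe x hx, ← hB, ← hR]
    ring
  have c0 := congrArg (fun F => coeff F 0) hG
  have c1 := congrArg (fun F => coeff F 1) hG
  have c2 := congrArg (fun F => coeff F 2) hG
  have c3 := congrArg (fun F => coeff F 3) hG
  have c4 := congrArg (fun F => coeff F 4) hG
  have c5 := congrArg (fun F => coeff F 5) hG
  simp only [coeff_X_pow_mul', coeff_sub, coeff_C_mul, coeff_X_mul, coeff_add,
    coeff_X_mul_zero] at c0 c1 c2 c3 c4 c5
  norm_num at c0 c1 c2 c3 c4 c5
  obtain ⟨-, l2, m2⟩ := hcond 2 (by omega) (by omega)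
  obtain ⟨-, l3, m3⟩ := hcond 3 (by omega) (by omega)
  obtain ⟨-, -, m4⟩ := hcond 4 (by omega) (by omega)
  have t02 := l2 0 (by omega)
  have t12 := l2 1 (by omega)
  have t03 := l3 0 (by omega)
  have s2 := m2 2 (by omega)
  have s3 := m3 1 (by omega)
  have s4 := m4 0 (by omega)
  norm_num at t02 t12 t03 s2 s3 s4
  -- A quadratic polynomial in `k` that vanishes at `0, 2, 3` is zero.
  have A0 : A.coeff 0 = 0 := by linear_combination (-1/2) * t02 + (1/3) * t03 - c0 / 6
  have B0 : B.coeff 0 = 0 := by linear_combination t02 / 2 - A0 + c0 / 2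
  have R1 : R.coeff 1 = 0 := by linear_combination -c1 + a * B0 - a * c0
  have t14 : 12 * A.coeff 1 + 4 * B.coeff 1 = 0 := by
    linear_combination s4 - R1 - a * (12 * A0 + 4 * B0 - c0)
  have A1 : A.coeff 1 = 0 := by linear_combination t14 / 8 - (t12 - R1) / 4
  have B1 : B.coeff 1 = 0 := by linear_combination t14 / 4 - 3 * A1
  have R2 : R.coeff 2 = 0 := by linear_combination -c2 + a * (B1 + R1)
  have B2 : B.coeff 2 = -2 * A.coeff 2 := by
    linear_combination s3 / 3 - R2 / 3 - a * (6 * A1 + 3 * B1 + R1) / 3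
  have R3 : R.coeff 3 = -2 * a * A.coeff 2 := by
    linear_combination -c3 + a * (B2 + R2)
  have B3 : B.coeff 3 = - A.coeff 3 + 2 * a * A.coeff 2 := by
    linear_combination s2 / 2 - R3 / 2 - a * (2 * B2 + R2) / 2
  have high : ∀ m, 7 ≤ m → A.coeff m = 0 ∧ B.coeff m = 0 ∧ R.coeff m = 0 := by
    intro m hm
    have u0 := (hcond n (by omega) le_rfl).1 m (by omega)
    have u1 := (hcond (n - 1) (by omega) (by omega)).1 m (by omega)
    have u2 := (hcond (n - 2) (by omega) (by omega)).1 m (by omega)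
    rw [Nat.cast_sub (by omega)] at u1 u2
    push_cast at u1 u2
    have hA : A.coeff m = 0 := by linear_combination (u0 - 2 * u1 + u2) / 2
    have hB : B.coeff m = 0 := by linear_combination u0 - u1 - 2 * (n - 1) * hA
    exact ⟨hA, hB, by linear_combination u0 - n * (n - 1) * hA - n * hB⟩
  have v0 := (hcond n (by omega) le_rfl).1 6 (by omega)
  have v1 := (hcond (n - 1) (by omega) (by omega)).1 6 (by omega)
  have w0 := (hcond n (by omega) le_rfl).1 5 (by omega)
  rw [Nat.cast_sub (by omega)] at v1
  push_cast at v1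
  have B6 : B.coeff 6 = -2 * (n - 1) * A.coeff 6 := by linear_combination v0 - v1
  have R6 : R.coeff 6 = n * (n - 1) * A.coeff 6 := by linear_combination v0 - n * B6
  have R5 : R.coeff 5 = - n * (B.coeff 5 + (n - 1) * A.coeff 5) := by linear_combination w0
  have B4 : B.coeff 4 = a * A.coeff 3 - n / a * (B.coeff 5 + (n - 1) * A.coeff 5) := by
    field_simp
    linear_combination -hGa + c5 + a * c4 - a ^ 2 * B3 - a ^ 2 * R3 + R5
  have expand : ∀ F : ℂ[X], (∀ m, 7 ≤ m → F.coeff m = 0) → ∀ x, F.eval x =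
      F.coeff 0 + F.coeff 1 * x + F.coeff 2 * x ^ 2 + F.coeff 3 * x ^ 3 + F.coeff 4 * x ^ 4
        + F.coeff 5 * x ^ 5 + F.coeff 6 * x ^ 6 := by
    intro F hF x
    have hd : F.natDegree < 7 := by
      have := natDegree_le_iff_coeff_eq_zero (p := F) (n := 6) |>.2 fun m hm => hF m hm
      omega
    rw [eval_eq_sum_range' hd]
    simp [Finset.sum_range_succ]
  refine ⟨A.coeff 6, A.coeff 5, A.coeff 4, A.coeff 3, A.coeff 2,
    B.coeff 5 + (n - 1) * A.coeff 5, R.coeff 4, fun x hx => ?_⟩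
  obtain ⟨hA, hB, hR⟩ := hABR x hx
  rw [expand A (fun m hm => (high m hm).1), A0, A1] at hA
  rw [expand B (fun m hm => (high m hm).2.1), B0, B1, B2, B3, B4, B6] at hB
  rw [expand R (fun m hm => (high m hm).2.2), ← c0, R1, R2, R3, R5, R6] at hR
  refine ⟨?_, ?_, ?_⟩
  · apply mul_left_cancel₀ (pow_ne_zero 2 hx)
    rw [hA]; ring
  · apply mul_left_cancel₀ (pow_ne_zero 3 hx)
    rw [hB]; field_simp; ring
  · apply mul_left_cancel₀ (pow_ne_zero 4 hx)
    rw [hR]; field_simp; ring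

/-! ### The basis of `ℰ^{a,b}ₙ` and translation to `b` -/

lemma SOApply_basis_zero (p q r : ℂ → ℂ) (a b z : ℂ) :
    SOApply p q r (1 - C a * (X - C b)) z = -a * q z + r z * (1 - a * (z - b)) := by
  simp [SOApply, mul_comm a]

lemma SOApply_basis_pow (p q r : ℂ → ℂ) (b z : ℂ) (k : ℕ) :
    SOApply p q r ((X - C b) ^ k) z = p z * (k * (k - 1) * (z - b) ^ (k - 2))
      + q z * (k * (z - b) ^ (k - 1)) + r z * (z - b) ^ k := by
  rcases k with _ | k
  · simp [SOApply]
  · simp only [SOApply, derivative_X_sub_C_pow, derivative_C_mul, eval_mul, eval_pow, eval_sub,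
      eval_X, eval_C, show k + 1 - 2 = k - 1 by omega, Nat.add_sub_cancel]
    push_cast
    ring

lemma basis_zero_mem {n : ℕ} (hn : 1 ≤ n) (a b : ℂ) :
    (1 - C a * (X - C b) : ℂ[X]) ∈ EabN a b n := by
  refine ⟨by simp [Eab], ?_⟩
  have : (1 - C a * (X - C b) : ℂ[X]).degree ≤ 1 := by compute_degree
  exact this.trans (by exact_mod_cast hn)

lemma basis_pow_mem {n k : ℕ} (hk : 2 ≤ k) (hkn : k ≤ n) (a b : ℂ) :
    ((X - C b) ^ k : ℂ[X]) ∈ EabN a b n := by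
  refine ⟨?_, ?_⟩
  · simp [Eab, derivative_X_sub_C_pow, show k - 1 ≠ 0 by omega, show k ≠ 0 by omega]
  · simp only [Pn, Set.mem_ofPred_eq, degree_pow, degree_X_sub_C]
    simpa using hkn

/-- Membership in `ℰ^{a,b}ₙ` in terms of the expansion in powers of `z - b`. -/
lemma taylor_of_mem {n : ℕ} {a b : ℂ} {g : ℂ[X]} (hg : g ∈ EabN a b n) :
    (taylor b g).natDegree ≤ n ∧ (taylor b g).coeff 1 + a * (taylor b g).coeff 0 = 0 := by
  refine ⟨?_, ?_⟩
  · rw [natDegree_taylor]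
    exact natDegree_le_iff_degree_le.2 hg.2
  · rw [taylor_coeff_zero, taylor_coeff_one]
    exact hg.1

lemma components_of_preserves {n : ℕ} (hn : 4 ≤ n) {a b : ℂ} (ha : a ≠ 0) {p q r : ℂ → ℂ}
    (h : SOPreserves p q r {z : ℂ | z ≠ b} (EabN a b n)) :
    ∃ c1 c2 c3 c4 c5 c6 c7 : ℂ, ∀ z : ℂ, z ≠ b →
      p z = c1 * (z - b) ^ 4 + c2 * (z - b) ^ 3 + c3 * (z - b) ^ 2 + c4 * (z - b) + c5 ∧
      q z = -2 * (n - 1) * c1 * (z - b) ^ 3 - (n - 1) * c2 * (z - b) ^ 2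
        + c4 * (a * (z - b) - 1)
        + c5 * (2 * (a - 1 / (z - b))) + c6 * ((z - b) * ((z - b) - n / a)) ∧
      r z = n * (n - 1) * c1 * (z - b) ^ 2 - c5 * (2 * a / (z - b)) - c6 * (n * (z - b))
        + c7 := by
  obtain ⟨c1, c2, c3, c4, c5, c6, c7, hc⟩ := components_at_zero (n := n) hn ha
    (p := fun x => p (x + b)) (q := fun x => q (x + b)) (r := fun x => r (x + b))
    (by
      obtain ⟨g, hg, hge⟩ := h _ (basis_zero_mem (by omega : 1 ≤ n) a b)
      refine ⟨taylor b g, (taylor_of_mem hg).2, fun x hx => ?_⟩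
      have := hge (x + b) (by simpa using hx)
      rw [SOApply_basis_zero] at this
      simpa [taylor_eval] using this)
    (by
      intro k hk hkn
      obtain ⟨g, hg, hge⟩ := h _ (basis_pow_mem hk hkn a b)
      refine ⟨taylor b g, (taylor_of_mem hg).1, (taylor_of_mem hg).2, fun x hx => ?_⟩
      have := hge (x + b) (by simpa using hx)
      rw [SOApply_basis_pow] at this
      simpa [taylor_eval] using this)
  refine ⟨c1, c2, c3, c4, c5, c6, c7, fun z hz => ?_⟩
  simpa using hc (z - b) (sub_ne_zero.2 hz)

/-! ### Preservation tested on the basis -/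

/-- The functions that agree off `b` with an element of `ℰ^{a,b}ₙ`, as a subspace. -/
def agreeSpace (a b : ℂ) (n : ℕ) : Submodule ℂ (ℂ → ℂ) where
  carrier := {S | ∃ g ∈ EabN a b n, ∀ z, z ≠ b → S z = g.eval z}
  zero_mem' := ⟨0, ⟨by simp [Eab], by simp [Pn]⟩, by simp⟩
  add_mem' := by
    rintro S S' ⟨g, hg, h⟩ ⟨g', hg', h'⟩
    refine ⟨g + g', ⟨?_, ?_⟩, fun z hz => by simp [h z hz, h' z hz]⟩
    · have e := hg.1
      have e' := hg'.1
      simp only [Eab, Set.mem_ofPred_eq, derivative_add, eval_add] at *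
      linear_combination e + e'
    · exact (degree_add_le _ _).trans (max_le hg.2 hg'.2)
  smul_mem' := by
    rintro c S ⟨g, hg, h⟩
    refine ⟨c • g, ⟨?_, ?_⟩, fun z hz => by simp [h z hz]⟩
    · have e := hg.1
      simp only [Eab, Set.mem_ofPred_eq, derivative_smul, eval_smul, smul_eq_mul] at *
      linear_combination c * e
    · exact (degree_smul_le _ _).trans hg.2

lemma agreeSpace_congr {a b : ℂ} {n : ℕ} {S S' : ℂ → ℂ} (hS : S ∈ agreeSpace a b n)
    (h : ∀ z, z ≠ b → S' z = S z) : S' ∈ agreeSpace a b n := by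
  obtain ⟨g, hg, hge⟩ := hS
  exact ⟨g, hg, fun z hz => (h z hz).trans (hge z hz)⟩

lemma zero_mem_agreeSpace {n : ℕ} (hn : 1 ≤ n) (a b : ℂ) :
    (fun z => 1 - a * (z - b)) ∈ agreeSpace a b n :=
  ⟨_, basis_zero_mem hn a b, by simp⟩

lemma pow_mem_agreeSpace {n k : ℕ} (hk : 2 ≤ k) (hkn : k ≤ n) (a b : ℂ) :
    (fun z => (z - b) ^ k) ∈ agreeSpace a b n :=
  ⟨_, basis_pow_mem hk hkn a b, by simp⟩

/-- A multiple `c · (z - b)ᵏ` also lies in the space when `k > n`, provided `c = 0` there. -/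
lemma const_mul_pow_mem {n k : ℕ} (hk : 2 ≤ k) (a b : ℂ) {c : ℂ} (hc : n < k → c = 0) :
    (fun z => c * (z - b) ^ k) ∈ agreeSpace a b n := by
  by_cases h : k ≤ n
  · exact (agreeSpace a b n).smul_mem c (pow_mem_agreeSpace hk h a b)
  · exact agreeSpace_congr (agreeSpace a b n).zero_mem fun z _ => by simp [hc (by omega)]

/-- The operator with components `p, q, r` as a linear map. -/
def SOLin (p q r : ℂ → ℂ) : ℂ[X] →ₗ[ℂ] (ℂ → ℂ) where
  toFun := SOApply p q r
  map_add' f g := by funext z; simp [SOApply]; ring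
  map_smul' c f := by funext z; simp [SOApply]; ring

/-- The polynomials `1 - a(z - b), (z - b)², …, (z - b)ⁿ` span `ℰ^{a,b}ₙ`. -/
lemma mem_eq_sum_basis {n : ℕ} (hn : 2 ≤ n) {a b : ℂ} {f : ℂ[X]} (hf : f ∈ EabN a b n) :
    ∃ u : ℕ → ℂ, f = u 0 • (1 - C a * (X - C b)) +
      ∑ i ∈ Finset.range (n - 1), u (i + 2) • (X - C b) ^ (i + 2) := by
  obtain ⟨hd, hc⟩ := taylor_of_mem hf
  refine ⟨(taylor b f).coeff, ?_⟩
  apply taylor_injective b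
  have hX : taylor b (X - C b) = (X : ℂ[X]) := by simp
  have e := (taylor b f).as_sum_range_C_mul_X_pow' (n := n - 1 + 1 + 1) (by omega)
  rw [Finset.sum_range_succ', Finset.sum_range_succ'] at e
  simp only [map_add, map_sum, map_smul, map_sub, taylor_mul, taylor_pow, hX, taylor_C,
    taylor_one, C_1]
  conv_lhs => rw [e]
  have h1 : (taylor b f).coeff 1 = -a * (taylor b f).coeff 0 := by linear_combination hc
  simp only [smul_eq_C_mul, zero_add, h1, C_mul, C_neg]
  ring

/-- Preservation of `ℰ^{a,b}ₙ` may be tested on the basis `1 - a(z - b), (z - b)², …`. -/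
lemma preserves_of_basis {n : ℕ} (hn : 2 ≤ n) {a b : ℂ} {p q r : ℂ → ℂ}
    (h0 : SOApply p q r (1 - C a * (X - C b)) ∈ agreeSpace a b n)
    (hk : ∀ k, 2 ≤ k → k ≤ n → SOApply p q r ((X - C b) ^ k) ∈ agreeSpace a b n) :
    SOPreserves p q r {z : ℂ | z ≠ b} (EabN a b n) := by
  intro f hf
  change SOLin p q r f ∈ agreeSpace a b n
  obtain ⟨u, hu⟩ := mem_eq_sum_basis hn hf
  rw [hu, map_add, map_smul, map_sum]
  refine Submodule.add_mem _ (Submodule.smul_mem _ _ h0) (Submodule.sum_mem _ fun i hi => ?_)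
  rw [map_smul]
  rw [Finset.mem_range] at hi
  exact Submodule.smul_mem _ _ (hk _ (by omega) (by omega))

/-! ### The seven operators on the basis -/

lemma Jop_basis_zero_mem {n : ℕ} (hn : 4 ≤ n) {a : ℂ} (ha : a ≠ 0) (b : ℂ) (i : Fin 7) :
    Jop n a b i (1 - C a * (X - C b)) ∈ agreeSpace a b n := by
  have e0 := zero_mem_agreeSpace (by omega : 1 ≤ n) a b
  have x2 := pow_mem_agreeSpace le_rfl (by omega : 2 ≤ n) a b
  have x3 := pow_mem_agreeSpace (by norm_num) (by omega : 3 ≤ n) a b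
  fin_cases i
  · refine agreeSpace_congr (Submodule.add_mem _ (Submodule.smul_mem _ ((n : ℂ) * (n - 1)) x2)
      (Submodule.smul_mem _ (-a * (n - 1) * (n - 2)) x3)) fun z hz => ?_
    simp [Jop]; ring
  · refine agreeSpace_congr (Submodule.smul_mem _ (a * (n - 1)) x2) fun z hz => ?_
    simp [Jop]; ring
  · refine agreeSpace_congr (Submodule.zero_mem _) fun z hz => ?_
    simp [Jop]
  · refine agreeSpace_congr (Submodule.smul_mem _ a e0) fun z hz => ?_
    simp [Jop]; ring
  · refine agreeSpace_congr (Submodule.zero_mem _) fun z hz => ?_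
    have := sub_ne_zero.2 hz
    simp [Jop]; field_simp; ring
  · refine agreeSpace_congr (Submodule.smul_mem _ (a * (n - 1)) x2) fun z hz => ?_
    simp [Jop]; field_simp; ring
  · refine agreeSpace_congr e0 fun z hz => ?_
    simp [Jop]

lemma Jop_basis_pow_mem {n k : ℕ} (hn : 4 ≤ n) (hk : 2 ≤ k) (hkn : k ≤ n)
    (a b : ℂ) (i : Fin 7) :
    Jop n a b i ((X - C b) ^ k) ∈ agreeSpace a b n := by
  have xk := pow_mem_agreeSpace hk hkn a b
  have d1 (z : ℂ) : eval z (derivative ((X - C b) ^ k)) = k * (z - b) ^ (k - 1) := by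
    simp [derivative_X_sub_C_pow]
  have d2 (z : ℂ) : eval z (derivative (derivative ((X - C b) ^ k))) =
      k * (k - 1) * (z - b) ^ (k - 2) := by
    have := SOApply_basis_pow (fun _ => 1) (fun _ => 0) (fun _ => 0) b z k
    simpa [SOApply] using this
  have d0 (z : ℂ) : eval z ((X - C b) ^ k) = (z - b) ^ k := by simp
  obtain ⟨j, rfl⟩ := Nat.exists_eq_add_of_le' hk
  have hj1 : j + 2 - 1 = j + 1 := by omega
  have hj2 : j + 2 - 2 = j := by omega
  rw [hj1] at d1
  rw [hj2] at d2
  push_cast at d1 d2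
  have xk1 : (fun z => ((j : ℂ) + 2 - n) * (z - b) ^ (j + 2 + 1)) ∈ agreeSpace a b n := by
    refine const_mul_pow_mem (by omega) a b fun h => ?_
    rw [show n = j + 2 by omega]
    push_cast; ring
  fin_cases i
  · have : (fun z => (((j : ℂ) + 2 - n) * (j + 3 - n)) * (z - b) ^ (j + 2 + 2))
        ∈ agreeSpace a b n := by
      refine const_mul_pow_mem (by omega) a b fun h => ?_
      obtain rfl | rfl : n = j + 2 ∨ n = j + 3 := by omega
      all_goals push_cast; ring
    refine agreeSpace_congr this fun z hz => ?_
    simp [Jop, d0, d1, d2]; ring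
  · refine agreeSpace_congr (Submodule.smul_mem _ ((j : ℂ) + 2) xk1) fun z hz => ?_
    simp [Jop, d1, d2]; ring
  · refine agreeSpace_congr (Submodule.smul_mem _ (((j : ℂ) + 2) * (j + 1)) xk) fun z hz => ?_
    simp [Jop, d2]; ring
  · -- The term `k(k-2)(z-b)^(k-1)` vanishes when `k = 2`.
    have : (fun z => (((j : ℂ) + 2) * j) * (z - b) ^ (j + 1)) ∈ agreeSpace a b n := by
      rcases j with _ | j
      · exact agreeSpace_congr (agreeSpace a b n).zero_mem fun z _ => by simp
      · exact Submodule.smul_mem _ _ (pow_mem_agreeSpace (by omega) (by omega) a b)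
    refine agreeSpace_congr (Submodule.add_mem _ this
      (Submodule.smul_mem _ (a * ((j : ℂ) + 2)) xk)) fun z hz => ?_
    simp [Jop, d1, d2]; ring
  · -- `J₅[(z-b)^k] = k(k-3)(z-b)^(k-2) + 2a(k-1)(z-b)^(k-1)`, which is `-2(1 - a(z-b))` at `k = 2`.
    have : (fun z => (((j : ℂ) + 2) * (j - 1)) * (z - b) ^ j + 2 * a * (j + 1) * (z - b) ^ (j + 1))
        ∈ agreeSpace a b n := by
      obtain rfl | rfl | hj : j = 0 ∨ j = 1 ∨ 2 ≤ j := by omega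
      · refine agreeSpace_congr (Submodule.smul_mem _ (-2)
          (zero_mem_agreeSpace (by omega : 1 ≤ n) a b)) fun z hz => ?_
        simp; ring
      · refine agreeSpace_congr (Submodule.smul_mem _ (4 * a)
          (pow_mem_agreeSpace le_rfl (by omega : 2 ≤ n) a b)) fun z hz => ?_
        simp only [Pi.smul_apply, smul_eq_mul]
        push_cast; ring
      · exact Submodule.add_mem _
          (Submodule.smul_mem _ _ (pow_mem_agreeSpace hj (by omega) a b))
          (Submodule.smul_mem _ _ (pow_mem_agreeSpace (by omega) (by omega) a b))
    refine agreeSpace_congr this fun z hz => ?_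
    have := sub_ne_zero.2 hz
    simp [Jop, d0, d1, d2]; field_simp; ring
  · refine agreeSpace_congr (Submodule.add_mem _ xk1
      (Submodule.smul_mem _ (-(n / a) * ((j : ℂ) + 2)) xk)) fun z hz => ?_
    simp [Jop, d0, d1]; ring
  · refine agreeSpace_congr xk fun z hz => ?_
    simp [Jop]

/-! ### Linear independence and conclusion -/

/-- Evaluating a vanishing combination on `1`, `z - b` and `(z - b)²` at a few points kills all
seven coefficients. -/
lemma Jop_linearIndependent {n : ℕ} (hn : 4 ≤ n) {a : ℂ} (ha : a ≠ 0) (b : ℂ) :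
    LinearIndependent ℂ
      (fun i : Fin 7 => fun (f : Polynomial ℂ) (w : {z : ℂ // z ≠ b}) =>
        Jop n a b i f (w : ℂ)) := by
  rw [Fintype.linearIndependent_iff]
  intro c hc
  have ev : ∀ (f : ℂ[X]) (x : ℂ), x ≠ 0 → ∑ i, c i * Jop n a b i f (x + b) = 0 := by
    intro f x hx
    have := congrFun (congrFun hc f) ⟨x + b, by simpa using hx⟩
    simpa [Finset.sum_apply] using this
  have hn0 : (n : ℂ) ≠ 0 := by exact_mod_cast (by omega : n ≠ 0)
  have hn1 : (n : ℂ) - 1 ≠ 0 := sub_ne_zero.2 (by exact_mod_cast (by omega : n ≠ 1))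
  have f1 := ev 1
  have fx := ev (X - C b)
  have fxx := ev ((X - C b) ^ 2) 1 one_ne_zero
  simp [Fin.sum_univ_seven, Jop] at f1 fx
  have E1 := f1 1 one_ne_zero
  have E2 := f1 (-1) (by norm_num)
  have E3 := f1 2 two_ne_zero
  have E4 := f1 (-2) (by norm_num)
  norm_num at E1 E2 E3 E4
  have h0 : c 0 = 0 := by
    have : c 0 * (n * (n - 1)) = 0 := by linear_combination (E3 + E4 - E1 - E2) / 6
    simpa [hn0, hn1] using this
  have h6 : c 6 = 0 := by linear_combination (E1 + E2) / 2 - n * (n - 1) * h0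
  have h4 : c 4 = 0 := by
    have : c 4 * a = 0 := by linear_combination (E3 - E4) / 6 - (E1 - E2) / 3
    simpa [ha] using this
  have h5 : c 5 = 0 := by
    have : c 5 * n = 0 := by linear_combination -(E1 - E2) / 2 - 2 * a * h4
    simpa [hn0] using this
  have F1 := fx 1 one_ne_zero
  have F2 := fx (-1) (by norm_num)
  have F3 := fx 2 two_ne_zero
  simp only [h0, h4, h5, h6] at F1 F2 F3
  norm_num at F1 F2 F3
  have h3 : c 3 = 0 := by linear_combination (F3 - 3 * F1 - F2) / 3
  have h1 : c 1 = 0 := by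
    have : c 1 * (n - 1) = 0 := by linear_combination -(F1 + F2) / 2 - h3
    simpa [hn1] using this
  have h2 : c 2 = 0 := by
    simpa [Fin.sum_univ_seven, Jop, h0, h1, h3, h4, h5, h6, derivative_X_sub_C_sq] using fxx
  intro i
  fin_cases i <;> assumption

/-- for `n ≥ 4` and `a ≠ 0`: if `T` preserves `ℰ^{a,b}ₙ` then `p` agrees
on `ℂ∖{b}` with a polynomial of degree at most 4; moreover `T` preserves `ℰ^{a,b}ₙ` iff
`T` is a linear combination of the seven operators `J₁,…,J₇`, and these operators are
linearly independent. -/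
theorem stmt14 (n : ℕ) (hn : 4 ≤ n) (a b : ℂ) (ha : a ≠ 0) (p q r : ℂ → ℂ) :
    (SOPreserves p q r {z : ℂ | z ≠ b} (EabN a b n) →
      ∃ P : Polynomial ℂ, P.degree ≤ 4 ∧ ∀ z : ℂ, z ≠ b → p z = P.eval z) ∧
    (SOPreserves p q r {z : ℂ | z ≠ b} (EabN a b n) ↔
      ∃ c : Fin 7 → ℂ, ∀ (f : Polynomial ℂ) (z : ℂ), z ≠ b →
        SOApply p q r f z = ∑ i, c i * Jop n a b i f z) ∧
    LinearIndependent ℂ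
      (fun i : Fin 7 => fun (f : Polynomial ℂ) (w : {z : ℂ // z ≠ b}) =>
        Jop n a b i f (w : ℂ)) := by
  have hfwd : SOPreserves p q r {z : ℂ | z ≠ b} (EabN a b n) →
      ∃ c : Fin 7 → ℂ, ∀ (f : Polynomial ℂ) (z : ℂ), z ≠ b →
        SOApply p q r f z = ∑ i, c i * Jop n a b i f z := by
    intro h
    obtain ⟨c1, c2, c3, c4, c5, c6, c7, hc⟩ := components_of_preserves hn ha h
    refine ⟨![c1, c2, c3, c4, c5, c6, c7], fun f z hz => ?_⟩
    obtain ⟨hp, hq, hr⟩ := hc z hz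
    simp only [SOApply, hp, hq, hr, Fin.sum_univ_seven, Jop]
    simp
    ring
  refine ⟨fun h => ?_, ⟨hfwd, ?_⟩, Jop_linearIndependent hn ha b⟩
  · obtain ⟨c1, c2, c3, c4, c5, c6, c7, hc⟩ := components_of_preserves hn ha h
    refine ⟨C c1 * (X - C b) ^ 4 + C c2 * (X - C b) ^ 3 + C c3 * (X - C b) ^ 2
      + C c4 * (X - C b) + C c5, by compute_degree, fun z hz => ?_⟩
    simp [(hc z hz).1]
  · rintro ⟨c, hc⟩
    refine preserves_of_basis (by omega) ?_ fun k hk hkn => ?_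
    · refine agreeSpace_congr (Submodule.sum_mem _ (t := Finset.univ) fun i _ =>
        Submodule.smul_mem _ (c i) (Jop_basis_zero_mem hn ha b i)) fun z hz => ?_
      simp [hc _ z hz]
    · refine agreeSpace_congr (Submodule.sum_mem _ (t := Finset.univ) fun i _ =>
        Submodule.smul_mem _ (c i) (Jop_basis_pow_mem hn hk hkn a b i)) fun z hz => ?_
      simp [hc _ z hz]
end
end

section
/- Let n ≥ 4 be an integer, let p ∈ ℂ[z] be a degree-4 polynomial with distinct roots z₁, z₂, z₃, z₄, let b ∈ ℂ with p(b) ≠ 0, and let k₁, k₂, k₃, k₄, λ ∈ ℂ satisfy k₁+k₂+k₃+k₄ = −n and Σᵢ₌₁⁴ kᵢ²·p′(zᵢ)/(b−zᵢ)² = 0. Set a = Σᵢ₌₁⁴ kᵢ/(b−zᵢ). Then there exist functions q, r on ℂ∖{b} such that the second order operator T with components p, q, r preserves ℰ^{a,b}ₙ, does not preserve 𝒫ₙ, and for every z ∉ {b, z₁, z₂, z₃, z₄} its potential invariant satisfies v(z) = −2p(b)/(z−b)² − p′(b)/(z−b) − Σᵢ₌₁⁴ (kᵢ² − 1/16)·p′(zᵢ)/(z−zᵢ)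 + λ. -/
/-!
Write `s = z - b`, `eᵢ = zᵢ - b`, `N = p · Σ kᵢ/(z - zᵢ)` (a cubic polynomial). The operator is
`T = p D² + q D + r` with `q = p′ + 2N - 2p/s`, and `r` is then forced by the prescribed potential.
With this `q`, the function `p` enters the denominator of the potential invariant only through
`N²/p` and `p′²/p`, whose partial fractions (`div_expansion`) have residues `kᵢ² p′(zᵢ)` and
`p′(zᵢ)` at `zᵢ`. These account exactly for the poles of the prescribed potential at the `zᵢ`, and
`potential_core` leaves `r = R₀ + R₁ s + n(n-1)c s² - 2 a p(b)/s`, where `c` is the leading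
coefficient of `p` and `R₁` is the linear coefficient of the polynomial part of `N²/p`.

Invariance of `ℰ^{a,b}ₙ` is a coefficient computation (`preserve_core`). The pole of `T[f]` at `b`
has residue `-2p(b)(f′(b) + a f(b))`, hence vanishes on `ℰ^{a,b}`. The terms of degree above `n`
cancel because `Σ kᵢ = -n`. The condition at `b` is inherited by `T[f]` exactly because
`R₁ = 2aN₁ - a²p₁`, with `N₁`, `p₁` the coefficients of `s` in `N`, `p`; the right side is the
derivative of `N²/p` at `b`, so this is the hypothesis `Σ kᵢ² p′(zᵢ)/(b - zᵢ)² = 0` (`sc1_eq`).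
Finally `T[z - b]` has a pole at `b` with residue `-2p(b) ≠ 0`, so `𝒫ₙ` is not preserved.
-/

open Polynomial

noncomputable section

/-! ### The operator with a simple pole at the origin -/

/-- `s` times the image of `F` under the operator with components `Pp`, `Pq / s`, `Pr / s`.
The variable `s = z - b` is centred at the pole, so that `q` and `r` have polynomial numerators. -/
def numOp (Pp Pq Pr F : Polynomial ℂ) : Polynomial ℂ :=
  X * Pp * derivative (derivative F) + Pq * derivative F + Pr * F

/-- The polynomial `x0 + x1 s + x2 s² + x3 s³ + x4 s⁴`. -/
def quartic (x0 x1 x2 x3 x4 : ℂ) : Polynomial ℂ :=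
  C x0 + C x1 * X ^ 1 + C x2 * X ^ 2 + C x3 * X ^ 3 + C x4 * X ^ 4

/-- The invariance of `ℰ^{a,0}ₙ`, read off coefficient by coefficient. Here `p` has coefficients
`pᵢ`, `N = p · Σ kᵢ/(s - eᵢ)` has coefficients `Nᵢ`, and `q = p′ + 2N - 2p/s`. The hypothesis
`hN0` makes `s · T[F]` vanish at `0`, `hR1` makes `T[F]` satisfy the condition at `0` again, and
`hN3`, `hR1'` cancel the coefficients of degrees `n + 2` and `n + 1` of `T[F]`. -/
lemma preserve_core (n : ℕ) (hn : 4 ≤ n) (p0 p1 p2 p3 p4 N0 N1 N2 N3 R0 R1 a : ℂ)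
    (hN0 : N0 = a * p0) (hN3 : N3 = -(n : ℂ) * p4)
    (hR1 : R1 = 2 * a * N1 - a ^ 2 * p1)
    (hR1' : R1 = -2 * n * N2 - n ^ 2 * p3)
    (F : Polynomial ℂ) (hF : F.natDegree ≤ n) (hE : F.coeff 1 + a * F.coeff 0 = 0) :
    ∃ G : Polynomial ℂ, G.natDegree ≤ n ∧ G.coeff 1 + a * G.coeff 0 = 0 ∧
      X * G = numOp (quartic p0 p1 p2 p3 p4)
        (quartic (-2 * p0) (-p1 + 2 * N0) (2 * N1) (p3 + 2 * N2) (2 * p4 + 2 * N3))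
        (quartic (-2 * N0) R0 R1 (n * (n - 1) * p4) 0) F := by
  set H := numOp (quartic p0 p1 p2 p3 p4)
        (quartic (-2 * p0) (-p1 + 2 * N0) (2 * N1) (p3 + 2 * N2) (2 * p4 + 2 * N3))
        (quartic (-2 * N0) R0 R1 (n * (n - 1) * p4) 0) F with hH
  have h0 : H.coeff 0 = 0 := by
    simp only [hH, numOp, quartic, add_mul, mul_add, mul_assoc, coeff_add, coeff_C_mul,
      coeff_X_pow_mul', coeff_X_mul_zero, coeff_derivative]
    simp
    rw [hN0]; linear_combination (-2 * p0) * hE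
  have hH' : X * H.divX = H := by
    conv_rhs => rw [← X_mul_divX_add H, h0]
    simp
  have hz : ∀ m, n < m → F.coeff m = 0 := fun m hm =>
    coeff_eq_zero_of_natDegree_lt (lt_of_le_of_lt hF hm)
  refine ⟨H.divX, ?_, ?_, hH'⟩
  · rw [natDegree_le_iff_coeff_eq_zero]
    intro m hm
    rw [coeff_divX]
    -- `m ≥ 5`, so no coefficient index below is a truncated subtraction.
    obtain ⟨d, rfl⟩ : ∃ d, m = d + 5 := ⟨m - 5, by omega⟩
    have e : H.coeff (d + 5 + 1) =
        (p2 * ((d:ℂ)+5)*(d+4) + 2*N1 *(d+5) + R0) * F.coeff (d+5)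
        + (p3 * ((d:ℂ)+4)*(d+3) + (p3+2*N2) *(d+4) + R1) * F.coeff (d+4)
        + (p4 * ((d:ℂ)+3)*(d+2) + (2*p4+2*N3) *(d+3) + n*(n-1)*p4) * F.coeff (d+3)
        + (p1 * ((d:ℂ)+6)*(d+5) + (-p1+2*N0) *(d+6) - 2*N0) * F.coeff (d+6)
        + (p0 * ((d:ℂ)+7)*(d+6) - 2*p0 *(d+7)) * F.coeff (d+7) := by
      simp only [hH, numOp, quartic, add_mul, mul_add, mul_assoc, coeff_add, coeff_C_mul,
        coeff_X_pow_mul', coeff_X_mul, coeff_derivative, ← mul_assoc X (C _), X_mul_C]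
      simp
      ring
    rw [e, hz (d+5) (by omega), hz (d+6) (by omega), hz (d+7) (by omega)]
    rcases Nat.lt_or_ge n (d+4) with h | h
    · rw [hz (d+4) h]
      rcases Nat.lt_or_ge n (d+3) with h' | h'
      · rw [hz _ h']; ring
      · obtain rfl : n = d + 3 := by omega
        rw [hN3]; push_cast; ring
    · obtain rfl : n = d + 4 := by omega
      rw [hN3, hR1']; push_cast; ring
  · rw [coeff_divX, coeff_divX]
    have e1 : H.coeff 1 = -2*p0*F.coeff 2 - p1 * F.coeff 1 + R0 * F.coeff 0 := by
      simp only [hH, numOp, quartic, add_mul, mul_add, mul_assoc, coeff_add, coeff_C_mul,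
        coeff_X_pow_mul', coeff_X_mul, coeff_derivative, ← mul_assoc X (C _), X_mul_C]
      simp
      ring
    have e2 : H.coeff 2 = 2*N0*F.coeff 2 + 2*N1*F.coeff 1 + R0 * F.coeff 1 + R1 * F.coeff 0 := by
      simp only [hH, numOp, quartic, add_mul, mul_add, mul_assoc, coeff_add, coeff_C_mul,
        coeff_X_pow_mul', coeff_X_mul, coeff_derivative, ← mul_assoc X (C _), X_mul_C]
      simp
      ring
    simp only [zero_add, one_add_one_eq_two, e1, e2]
    rw [hN0, hR1]
    linear_combination (2 * N1 + R0 - a * p1) * hE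

lemma eval_quartic (x0 x1 x2 x3 x4 s : ℂ) : (quartic x0 x1 x2 x3 x4).eval s =
    x0 + x1 * s + x2 * s ^ 2 + x3 * s ^ 3 + x4 * s ^ 4 := by
  simp [quartic]

/-- Transport of the invariance statement from the variable `s` to `z = s + b`. -/
lemma soPreserves_of_numOp {n : ℕ} {p q r : ℂ → ℂ} {a b : ℂ} {Pp Pq Pr : Polynomial ℂ}
    (hp : ∀ s, p (s + b) = Pp.eval s) (hq : ∀ s ≠ 0, s * q (s + b) = Pq.eval s)
    (hr : ∀ s ≠ 0, s * r (s + b) = Pr.eval s)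
    (h : ∀ F : Polynomial ℂ, F.natDegree ≤ n → F.coeff 1 + a * F.coeff 0 = 0 →
      ∃ G : Polynomial ℂ, G.natDegree ≤ n ∧ G.coeff 1 + a * G.coeff 0 = 0 ∧
        X * G = numOp Pp Pq Pr F) :
    SOPreserves p q r {w : ℂ | w ≠ b} (EabN a b n) := by
  have c0 : ∀ f : Polynomial ℂ, f.coeff 0 = f.eval 0 := fun f => coeff_zero_eq_eval_zero f
  have c1 : ∀ f : Polynomial ℂ, f.coeff 1 = (derivative f).eval 0 := fun f => by
    rw [← coeff_zero_eq_eval_zero, coeff_derivative]; simp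
  rintro f ⟨hf, hfn⟩
  have hfn' : f.natDegree ≤ n := natDegree_le_iff_degree_le.2 hfn
  have hf' : (derivative f).eval b + a * f.eval b = 0 := hf
  obtain ⟨G, hG, hG0, hGe⟩ := h (f.comp (X + C b))
    (by rw [natDegree_comp]; simpa using hfn')
    (by rw [c0, c1]; simpa [derivative_comp] using hf')
  refine ⟨G.comp (X - C b), ⟨?_, ?_⟩, ?_⟩
  · change (derivative (G.comp (X - C b))).eval b + a * (G.comp (X - C b)).eval b = 0
    rw [c0, c1] at hG0
    simpa [derivative_comp] using hG0
  · change (G.comp (X - C b)).degree ≤ n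
    rw [← natDegree_le_iff_degree_le, natDegree_comp]
    simpa using hG
  · intro w hw
    have hs : w - b ≠ 0 := sub_ne_zero.2 hw
    have e := congrArg (Polynomial.eval (w - b)) hGe
    simp only [numOp, derivative_comp, eval_add, eval_mul, eval_X, derivative_add, derivative_X,
      derivative_C, add_zero, one_mul, eval_comp, eval_C, ← hp, ← hq _ hs, ← hr _ hs,
      sub_add_cancel] at e
    simp only [SOApply, eval_comp, eval_sub, eval_X, eval_C]
    apply mul_left_cancel₀ hs
    rw [e]; ring

/-- If `q` has a genuine simple pole at `b` and `r` at most a simple one, then `T[z - b]` has a pole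
at `b`, so it is not a polynomial. -/
lemma not_soPreserves {n : ℕ} (hn : 1 ≤ n) {p q r : ℂ → ℂ} {b : ℂ} {Pq Pr : Polynomial ℂ}
    (hq : ∀ s ≠ 0, s * q (s + b) = Pq.eval s)
    (hr : ∀ s ≠ 0, s * r (s + b) = Pr.eval s) (h0 : Pq.eval 0 ≠ 0) :
    ¬ SOPreserves p q r {w : ℂ | w ≠ b} (Pn n) := by
  intro h
  obtain ⟨g, -, hg⟩ := h (X - C b) (by
    change degree (X - C b) ≤ (n : ℕ)
    rw [degree_X_sub_C]; exact_mod_cast hn)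
  have e : X * g.comp (X + C b) = Pq + Pr * X := by
    refine eq_of_infinite_eval_eq _ _ ((Set.finite_singleton (0 : ℂ)).infinite_compl.mono ?_)
    intro s hs
    have hs : s ≠ 0 := hs
    have := hg (s + b) (by simpa using hs)
    simp only [SOApply, derivative_sub, derivative_X, derivative_C, eval_sub, eval_X, eval_C,
      sub_zero, derivative_one, eval_zero, mul_zero, eval_one, zero_add] at this
    simp only [Set.mem_ofPred_eq, eval_mul, eval_X, eval_comp, eval_add, eval_C, ← hq s hs,
      ← hr s hs, ← this]
    ring
  apply h0
  have := congrArg (Polynomial.eval 0) e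
  simpa using this.symm

/-! ### Partial fractions of `N² / p` -/

/-- The polynomial form of `div_identity`. -/
lemma sq_identity (c k0 k1 k2 k3 x0 x1 x2 x3 : ℂ) :
    (c * (k0*x1*x2*x3 + k1*x0*x2*x3 + k2*x0*x1*x3 + k3*x0*x1*x2))^2 =
    (c * (k0^2*(x1*x2+x1*x3+x2*x3-(x1+x2+x3)*x0+x0^2)
      + k1^2*(x0*x2+x0*x3+x2*x3-(x0+x2+x3)*x1+x1^2)
      + k2^2*(x1*x0+x1*x3+x0*x3-(x1+x0+x3)*x2+x2^2)
      + k3^2*(x1*x2+x1*x0+x2*x0-(x1+x2+x0)*x3+x3^2)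
      + 2*(k0*k1*x2*x3+k0*k2*x1*x3+k0*k3*x1*x2+k1*k2*x0*x3+k1*k3*x0*x2+k2*k3*x0*x1)))
      * (c * (x0*x1*x2*x3))
    + (k0^2 * (c*(x1-x0)*(x2-x0)*(x3-x0)) * (c*(x1*x2*x3))
      + k1^2 * (c*(x0-x1)*(x2-x1)*(x3-x1)) * (c*(x0*x2*x3))
      + k2^2 * (c*(x0-x2)*(x1-x2)*(x3-x2)) * (c*(x0*x1*x3))
      + k3^2 * (c*(x0-x3)*(x1-x3)*(x2-x3)) * (c*(x0*x1*x2))) := by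
  ring

/-- Partial fractions of `p (Σ kᵢ/xᵢ)²` for `p = c x₀x₁x₂x₃`, where `xᵢ = s - eᵢ`. The differences
`xⱼ - xᵢ` are constants, so the last four terms are the polar parts, and the first one is a
quadratic polynomial in `s`. -/
lemma div_identity {c k0 k1 k2 k3 x0 x1 x2 x3 : ℂ} (hc : c ≠ 0) (h0 : x0 ≠ 0) (h1 : x1 ≠ 0)
    (h2 : x2 ≠ 0) (h3 : x3 ≠ 0) :
    (c * (k0*x1*x2*x3 + k1*x0*x2*x3 + k2*x0*x1*x3 + k3*x0*x1*x2))^2 / (c * (x0*x1*x2*x3)) =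
    (c * (k0^2*(x1*x2+x1*x3+x2*x3-(x1+x2+x3)*x0+x0^2)
      + k1^2*(x0*x2+x0*x3+x2*x3-(x0+x2+x3)*x1+x1^2)
      + k2^2*(x1*x0+x1*x3+x0*x3-(x1+x0+x3)*x2+x2^2)
      + k3^2*(x1*x2+x1*x0+x2*x0-(x1+x2+x0)*x3+x3^2)
      + 2*(k0*k1*x2*x3+k0*k2*x1*x3+k0*k3*x1*x2+k1*k2*x0*x3+k1*k3*x0*x2+k2*k3*x0*x1)))
    + (k0^2 * (c*((x1-x0)*(x2-x0)*(x3-x0))) / x0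
      + k1^2 * (c*((x0-x1)*(x2-x1)*(x3-x1))) / x1
      + k2^2 * (c*((x0-x2)*(x1-x2)*(x3-x2))) / x2
      + k3^2 * (c*((x0-x3)*(x1-x3)*(x2-x3))) / x3) := by
  rw [sq_identity]
  field_simp

/-- Coefficient of `s^0` in `N = p · Σ kᵢ/(s - eᵢ)`, where `p = c ∏ (s - eᵢ)`. For `k = 1`, `N = p′`. -/
def nc0 (c : ℂ) (e k : Fin 4 → ℂ) : ℂ :=
  -c * (k 0 * e 1 * e 2 * e 3 + k 1 * e 0 * e 2 * e 3 + k 2 * e 0 * e 1 * e 3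
    + k 3 * e 0 * e 1 * e 2)

/-- Coefficient of `s^1` in `N = p · Σ kᵢ/(s - eᵢ)`, where `p = c ∏ (s - eᵢ)`. -/
def nc1 (c : ℂ) (e k : Fin 4 → ℂ) : ℂ :=
  c * (k 0 * (e 1 * e 2 + e 1 * e 3 + e 2 * e 3) + k 1 * (e 0 * e 2 + e 0 * e 3 + e 2 * e 3)
    + k 2 * (e 0 * e 1 + e 0 * e 3 + e 1 * e 3) + k 3 * (e 0 * e 1 + e 0 * e 2 + e 1 * e 2))

/-- Coefficient of `s^2` in `N = p · Σ kᵢ/(s - eᵢ)`, where `p = c ∏ (s - eᵢ)`. -/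
def nc2 (c : ℂ) (e k : Fin 4 → ℂ) : ℂ :=
  -c * (k 0 * (e 1 + e 2 + e 3) + k 1 * (e 0 + e 2 + e 3)
    + k 2 * (e 0 + e 1 + e 3) + k 3 * (e 0 + e 1 + e 2))

/-- Coefficient of `s^3` in `N = p · Σ kᵢ/(s - eᵢ)`, where `p = c ∏ (s - eᵢ)`. -/
def nc3 (c : ℂ) (k : Fin 4 → ℂ) : ℂ := c * (k 0 + k 1 + k 2 + k 3)

/-- Constant coefficient of the polynomial part of `N²/p`. -/
def sc0 (c : ℂ) (e k : Fin 4 → ℂ) : ℂ :=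
  c * (k 0^2*(e 1*e 2+e 1*e 3+e 2*e 3-(e 1+e 2+e 3)*e 0+e 0^2)
      + k 1^2*(e 0*e 2+e 0*e 3+e 2*e 3-(e 0+e 2+e 3)*e 1+e 1^2)
      + k 2^2*(e 1*e 0+e 1*e 3+e 0*e 3-(e 1+e 0+e 3)*e 2+e 2^2)
      + k 3^2*(e 1*e 2+e 1*e 0+e 2*e 0-(e 1+e 2+e 0)*e 3+e 3^2)
      + 2*(k 0*k 1*e 2*e 3+k 0*k 2*e 1*e 3+k 0*k 3*e 1*e 2+k 1*k 2*e 0*e 3+k 1*k 3*e 0*e 2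
        +k 2*k 3*e 0*e 1))

/-- Coefficient of `s` in the polynomial part of `N²/p`. -/
def sc1 (c : ℂ) (e k : Fin 4 → ℂ) : ℂ :=
  c * (2 * (k 0 + k 1 + k 2 + k 3) * (k 0 * e 0 + k 1 * e 1 + k 2 * e 2 + k 3 * e 3)
    - (k 0 + k 1 + k 2 + k 3) ^ 2 * (e 0 + e 1 + e 2 + e 3))

lemma div_expansion {c s : ℂ} {e : Fin 4 → ℂ} (k : Fin 4 → ℂ) (hc : c ≠ 0)
    (h : ∀ i, s - e i ≠ 0) :
    (nc0 c e k + nc1 c e k * s + nc2 c e k * s ^ 2 + nc3 c k * s ^ 3) ^ 2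
      / (c * ((s - e 0) * (s - e 1) * (s - e 2) * (s - e 3))) =
    sc0 c e k + sc1 c e k * s + c * (k 0 + k 1 + k 2 + k 3) ^ 2 * s ^ 2 +
      (k 0^2 * (c*((e 0-e 1)*(e 0-e 2)*(e 0-e 3))) / (s - e 0)
      + k 1^2 * (c*((e 1-e 0)*(e 1-e 2)*(e 1-e 3))) / (s - e 1)
      + k 2^2 * (c*((e 2-e 0)*(e 2-e 1)*(e 2-e 3))) / (s - e 2)
      + k 3^2 * (c*((e 3-e 0)*(e 3-e 1)*(e 3-e 2))) / (s - e 3)) := by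
  have := div_identity (k0 := k 0) (k1 := k 1) (k2 := k 2) (k3 := k 3) hc (h 0) (h 1) (h 2) (h 3)
  have t : ∀ x y : ℂ, s - x - (s - y) = y - x := fun x y => by ring
  simp only [t] at this
  rw [show nc0 c e k + nc1 c e k * s + nc2 c e k * s ^ 2 + nc3 c k * s ^ 3 =
    c * (k 0 * (s - e 1) * (s - e 2) * (s - e 3) + k 1 * (s - e 0) * (s - e 2) * (s - e 3)
      + k 2 * (s - e 0) * (s - e 1) * (s - e 3) + k 3 * (s - e 0) * (s - e 1) * (s - e 2)) by
      simp only [nc0, nc1, nc2, nc3]; ring, this]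
  congr 1
  simp only [sc0, sc1]; ring

/-- The role of the quadratic constraint: it says that the fractional part of `N²/p` has zero
derivative at `0`, so the derivative `2aN₁ - a²p₁` of `N²/p` at `0`, where `N₀ = a p₀`, is that of
the polynomial part. -/
lemma sc1_eq {c a : ℂ} {e k : Fin 4 → ℂ} (hc : c ≠ 0) (h : ∀ i, e i ≠ 0)
    (ha : nc0 c e k = a * (c * (e 0 * e 1 * e 2 * e 3)))
    (hquad : k 0^2 * (c*((e 0-e 1)*(e 0-e 2)*(e 0-e 3))) / (e 0) ^ 2
      + k 1^2 * (c*((e 1-e 0)*(e 1-e 2)*(e 1-e 3))) / (e 1) ^ 2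
      + k 2^2 * (c*((e 2-e 0)*(e 2-e 1)*(e 2-e 3))) / (e 2) ^ 2
      + k 3^2 * (c*((e 3-e 0)*(e 3-e 1)*(e 3-e 2))) / (e 3) ^ 2 = 0) :
    sc1 c e k = 2 * a * nc1 c e k - a ^ 2 * nc0 c e 1 := by
  have h0 := h 0
  have h1 := h 1
  have h2 := h 2
  have h3 := h 3
  have hp : c * (e 0 * e 1 * e 2 * e 3) ≠ 0 := by
    simp only [ne_eq, mul_eq_zero, not_or]; tauto
  have ha' : a = nc0 c e k / (c * (e 0 * e 1 * e 2 * e 3)) := by rw [ha]; field_simp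
  rw [ha', ← sub_eq_zero, ← hquad]
  simp only [sc1, nc0, nc1, Pi.one_apply]
  field_simp
  ring

/-! ### The potential invariant -/

/-- The potential invariant in the variable `s`. Writing `q - p′ = 2(N - p/s)`, it involves `p` in a
denominator only through `N²/p` and `p′²/p`, whose partial fractions are supplied by `hS`, `hU`
(with fractional parts `A`, `B`); what is left is a Laurent polynomial identity in `s`. -/
lemma potential_core {n s p0 p1 p2 p3 p4 N0 N1 N2 N3 S0 R1 U0 lam A B P D N : ℂ} (hs : s ≠ 0)
    (hP : P = p0 + p1 * s + p2 * s ^ 2 + p3 * s ^ 3 + p4 * s ^ 4) (hP0 : P ≠ 0)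
    (hD : D = p1 + 2 * p2 * s + 3 * p3 * s ^ 2 + 4 * p4 * s ^ 3)
    (hN : N = N0 + N1 * s + N2 * s ^ 2 + N3 * s ^ 3) (hN3 : N3 = -n * p4)
    (hS : N ^ 2 / P = S0 + R1 * s + n ^ 2 * p4 * s ^ 2 + A)
    (hU : D ^ 2 / P = U0 + 8 * p3 * s + 16 * p4 * s ^ 2 + B) :
    (-2 * N0 / s + (lam + p2 / 2 - N1 + S0 - U0 / 16) + R1 * s + n * (n - 1) * p4 * s ^ 2)
      - (2 * p0 / s ^ 2 + 2 * N1 + 2 * (p3 + 2 * N2) * s + 3 * (2 * p4 + 2 * N3) * s ^ 2) / 2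
      + (2 * p2 + 6 * p3 * s + 12 * p4 * s ^ 2) / 4
      - ((-2 * p0 / s + (-p1 + 2 * N0) + 2 * N1 * s + (p3 + 2 * N2) * s ^ 2
          + (2 * p4 + 2 * N3) * s ^ 3) - D) ^ 2 / (4 * P) + D ^ 2 / (16 * P)
    = -(2 * p0) / s ^ 2 - p1 / s - (A - B / 16) + lam := by
  have e1 : (-2 * p0 / s + (-p1 + 2 * N0) + 2 * N1 * s + (p3 + 2 * N2) * s ^ 2
          + (2 * p4 + 2 * N3) * s ^ 3) - D = 2 * (N - P / s) := by
    rw [hD, hN, hP]; field_simp; ring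
  have e2 : (2 * (N - P / s)) ^ 2 / (4 * P) = N ^ 2 / P - 2 * N / s + P / s ^ 2 := by
    field_simp; ring
  have e3 : D ^ 2 / (16 * P) = D ^ 2 / P / 16 := by field_simp
  rw [e1, e2, e3, hS, hU, hN, hP, hN3]
  field_simp; ring

/-! ### Assembling the operator -/

lemma exists_factor {P : Polynomial ℂ} (hdeg : P.degree = 4) {z : Fin 4 → ℂ}
    (hinj : Function.Injective z) (hroot : ∀ i, P.eval (z i) = 0) :
    ∃ c : ℂ, c ≠ 0 ∧ P = C c * ((X - C (z 0)) * (X - C (z 1)) * (X - C (z 2)) * (X - C (z 3))) := by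
  have hd : (∏ i, (X - C (z i))) ∣ P :=
    Finset.prod_dvd_of_coprime
      (fun i _ j _ hij => pairwise_coprime_X_sub_C hinj hij)
      (fun i _ => dvd_iff_isRoot.2 (hroot i))
  obtain ⟨Q, hQ⟩ := hd
  have hP0 : P ≠ 0 := by rintro rfl; simp at hdeg
  have hdp : (∏ i, (X - C (z i))).degree = 4 := by
    rw [degree_prod]; simp [degree_X_sub_C]
  have hQ0 : Q.degree = 0 := by
    have h := hdeg
    rw [hQ, degree_mul, hdp] at h
    have hQn : Q ≠ 0 := by rintro rfl; exact hP0 (by rw [hQ, mul_zero])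
    rw [degree_eq_natDegree hQn] at h ⊢
    norm_cast at h ⊢
    omega
  rw [eq_C_of_degree_eq_zero hQ0] at hQ
  refine ⟨Q.coeff 0, ?_, ?_⟩
  · intro h; rw [h, C_0, mul_zero] at hQ; exact hP0 hQ
  · rw [hQ, Fin.prod_univ_four, mul_comm]

/-- existence of an `X₁` operator with prescribed potential: given `p` of
degree 4 with distinct roots, `b` with `p(b) ≠ 0`, and `kᵢ, λ` satisfying
`k₁+k₂+k₃+k₄ = −n` and `Σᵢ kᵢ²·p′(zᵢ)/(b−zᵢ)² = 0`, with `a = Σᵢ kᵢ/(b−zᵢ)`, there are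
components `q, r` on `ℂ∖{b}` so that `T` preserves `ℰ^{a,b}ₙ`, does not preserve `𝒫ₙ`,
and has the stated potential invariant. -/
theorem stmt15 (n : ℕ) (hn : 4 ≤ n) (P : Polynomial ℂ) (hdeg : P.degree = 4)
    (z : Fin 4 → ℂ) (hinj : Function.Injective z) (hroot : ∀ i, P.eval (z i) = 0)
    (b : ℂ) (hb : P.eval b ≠ 0) (k : Fin 4 → ℂ) (lam : ℂ)
    (hsum : k 0 + k 1 + k 2 + k 3 = -(n : ℂ))
    (hquad : ∑ i, k i ^ 2 * (Polynomial.derivative P).eval (z i) / (b - z i) ^ 2 = 0) :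
    ∃ q r : ℂ → ℂ,
      SOPreserves P.eval q r {w : ℂ | w ≠ b} (EabN (∑ i, k i / (b - z i)) b n) ∧
      ¬ SOPreserves P.eval q r {w : ℂ | w ≠ b} (Pn n) ∧
      ∀ w : ℂ, w ≠ b → (∀ i, w ≠ z i) →
        potentialInv P.eval q r w =
          -(2 * P.eval b) / (w - b) ^ 2 - (Polynomial.derivative P).eval b / (w - b)
            - (∑ i, (k i ^ 2 - 1 / 16) * (Polynomial.derivative P).eval (z i) / (w - z i))
            + lam := by
  obtain ⟨c, hc, hPf⟩ := exists_factor hdeg hinj hroot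
  set e : Fin 4 → ℂ := fun i => z i - b with he
  have hPe : ∀ w, P.eval w = c * ((w - z 0) * (w - z 1) * (w - z 2) * (w - z 3)) := fun w => by
    rw [hPf]; simp
  have hze : ∀ i, z i = e i + b := fun i => by simp [he]
  have hbz : ∀ i, b - z i = -e i := fun i => by simp [he]
  have he0 : ∀ i, e i ≠ 0 := fun i h => hb (by
    rw [← hroot i]; congr 1; simpa [he, sub_eq_zero, eq_comm] using h)
  have h0 := he0 0
  have h1 := he0 1
  have h2 := he0 2
  have h3 := he0 3
  have hP' : ∀ s, (derivative P).eval (s + b) =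
      nc0 c e 1 + nc1 c e 1 * s + nc2 c e 1 * s ^ 2 + nc3 c 1 * s ^ 3 := fun s => by
    rw [hPf]
    simp only [derivative_mul, derivative_sub, derivative_X, derivative_C, eval_mul, eval_add,
      eval_sub, eval_X, eval_C, sub_zero, zero_mul, zero_add, one_mul, mul_one, hze, nc0, nc1,
      nc2, nc3, Pi.one_apply]
    ring
  have hP'' : ∀ s, (derivative (derivative P)).eval (s + b) =
      nc1 c e 1 + 2 * nc2 c e 1 * s + 3 * nc3 c 1 * s ^ 2 := fun s => by
    rw [hPf]
    simp only [derivative_mul, derivative_sub, derivative_X, derivative_C, eval_mul, eval_add,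
      eval_sub, eval_X, eval_C, sub_zero, zero_mul, zero_add, one_mul, mul_one, hze, nc1,
      nc2, nc3, Pi.one_apply, derivative_add, eval_one]
    ring
  set a : ℂ := ∑ i, k i / (b - z i) with ha
  have hN0 : nc0 c e k = a * (c * (e 0 * e 1 * e 2 * e 3)) := by
    rw [ha]; simp only [Fin.sum_univ_four, hbz, nc0]; field_simp; ring
  have hd0 : (derivative P).eval (z 0) = c * ((e 0 - e 1) * (e 0 - e 2) * (e 0 - e 3)) := by
    rw [hze, hP']; simp only [nc0, nc1, nc2, nc3, Pi.one_apply]; ring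
  have hd1 : (derivative P).eval (z 1) = c * ((e 1 - e 0) * (e 1 - e 2) * (e 1 - e 3)) := by
    rw [hze, hP']; simp only [nc0, nc1, nc2, nc3, Pi.one_apply]; ring
  have hd2 : (derivative P).eval (z 2) = c * ((e 2 - e 0) * (e 2 - e 1) * (e 2 - e 3)) := by
    rw [hze, hP']; simp only [nc0, nc1, nc2, nc3, Pi.one_apply]; ring
  have hd3 : (derivative P).eval (z 3) = c * ((e 3 - e 0) * (e 3 - e 1) * (e 3 - e 2)) := by
    rw [hze, hP']; simp only [nc0, nc1, nc2, nc3, Pi.one_apply]; ring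
  have hS1 := sc1_eq (k := k) hc he0 hN0 (by
    rw [← hquad]; simp only [Fin.sum_univ_four, hbz, hd0, hd1, hd2, hd3, neg_sq])
  have hk : k 0 = -n - k 1 - k 2 - k 3 := by linear_combination hsum
  have hN3 : nc3 c k = -(n : ℂ) * c := by rw [nc3, hsum]; ring
  -- The coefficients of `p` in `s` are kept as opaque scalars from here on.
  obtain ⟨p0, hp0⟩ : ∃ x, x = c * (e 0 * e 1 * e 2 * e 3) := ⟨_, rfl⟩
  obtain ⟨p1, hp1⟩ : ∃ x, x = nc0 c e 1 := ⟨_, rfl⟩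
  obtain ⟨p2, hp2⟩ : ∃ x, x = nc1 c e 1 / 2 := ⟨_, rfl⟩
  obtain ⟨p3, hp3⟩ : ∃ x, x = nc2 c e 1 / 3 := ⟨_, rfl⟩
  have hPs : ∀ s, P.eval (s + b) = p0 + p1 * s + p2 * s ^ 2 + p3 * s ^ 3 + c * s ^ 4 :=
    fun s => by
      rw [hPe, hp0, hp1, hp2, hp3]
      simp only [hze, nc0, nc1, nc2, Pi.one_apply]; ring
  have hPb : P.eval b = p0 := by simpa using hPs 0
  have hdPb : (derivative P).eval b = p1 := by rw [hp1]; simpa using hP' 0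
  rw [← hp0] at hN0
  rw [← hp1] at hS1
  have hS1' : sc1 c e k = -2 * n * nc2 c e k - n ^ 2 * p3 := by
    rw [hp3]; simp only [sc1, nc2, Pi.one_apply, hk]; ring
  -- The value of `R0` is the one that makes `λ` the constant term of the potential.
  set R0 : ℂ := lam + p2 / 2 - nc1 c e k + sc0 c e k - sc0 c e 1 / 16 with hR0
  have hq : ∀ s ≠ 0, s * (-2 * p0 / s + (-p1 + 2 * nc0 c e k) + 2 * nc1 c e k * s
      + (p3 + 2 * nc2 c e k) * s ^ 2 + (2 * c + 2 * nc3 c k) * s ^ 3) =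
      (quartic (-2 * p0) (-p1 + 2 * nc0 c e k) (2 * nc1 c e k) (p3 + 2 * nc2 c e k)
        (2 * c + 2 * nc3 c k)).eval s := fun s hs => by
    rw [eval_quartic]; field_simp
  have hr : ∀ s ≠ 0, s * (-2 * nc0 c e k / s + R0 + sc1 c e k * s + n * (n - 1) * c * s ^ 2) =
      (quartic (-2 * nc0 c e k) R0 (sc1 c e k) (n * (n - 1) * c) 0).eval s := fun s hs => by
    rw [eval_quartic]; field_simp; ring
  refine ⟨fun w => -2 * p0 / (w - b) + (-p1 + 2 * nc0 c e k) + 2 * nc1 c e k * (w - b)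
      + (p3 + 2 * nc2 c e k) * (w - b) ^ 2 + (2 * c + 2 * nc3 c k) * (w - b) ^ 3,
    fun w => -2 * nc0 c e k / (w - b) + R0 + sc1 c e k * (w - b)
      + n * (n - 1) * c * (w - b) ^ 2, ?_, ?_, ?_⟩
  · refine soPreserves_of_numOp (fun s => ?_) (fun s hs => ?_) (fun s hs => ?_)
      (preserve_core n hn p0 p1 p2 p3 c _ _ _ _ R0 _ a hN0 hN3 hS1 hS1')
    · rw [hPs, eval_quartic]
    · rw [add_sub_cancel_right, hq s hs]
    · rw [add_sub_cancel_right, hr s hs]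
  · refine not_soPreserves (by omega)
      (Pq := quartic (-2 * p0) (-p1 + 2 * nc0 c e k) (2 * nc1 c e k) (p3 + 2 * nc2 c e k)
        (2 * c + 2 * nc3 c k))
      (Pr := quartic (-2 * nc0 c e k) R0 (sc1 c e k) (n * (n - 1) * c) 0)
      (fun s hs => ?_) (fun s hs => ?_) ?_
    · rw [add_sub_cancel_right, hq s hs]
    · rw [add_sub_cancel_right, hr s hs]
    · rw [eval_quartic]; rw [hPb] at hb; simpa using hb
  · intro w hw hwz
    obtain ⟨s, rfl⟩ : ∃ s, w = s + b := ⟨w - b, by ring⟩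
    have hs : s ≠ 0 := by rintro rfl; simp at hw
    have hse : ∀ i, s - e i ≠ 0 := fun i h => hwz i (by rw [hze]; linear_combination h)
    have hPs0 : P.eval (s + b) = c * ((s - e 0) * (s - e 1) * (s - e 2) * (s - e 3)) := by
      rw [hPe]; simp only [hze]; ring
    have hPne : P.eval (s + b) ≠ 0 := by
      rw [hPs0]
      exact mul_ne_zero hc (mul_ne_zero (mul_ne_zero (mul_ne_zero (hse 0) (hse 1)) (hse 2)) (hse 3))
    have hq' : deriv (fun w => -2 * p0 / (w - b) + (-p1 + 2 * nc0 c e k) + 2 * nc1 c e k * (w - b)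
        + (p3 + 2 * nc2 c e k) * (w - b) ^ 2 + (2 * c + 2 * nc3 c k) * (w - b) ^ 3) (s + b) =
        2 * p0 / s ^ 2 + 2 * nc1 c e k + 2 * (p3 + 2 * nc2 c e k) * s
          + 3 * (2 * c + 2 * nc3 c k) * s ^ 2 := by
      have hi : HasDerivAt (fun w : ℂ => w - b) 1 (s + b) := (hasDerivAt_id _).sub_const b
      have hs' : s + b - b ≠ 0 := by simpa using hs
      have := (((((hi.inv hs').const_mul (-2 * p0)).add_const (-p1 + 2 * nc0 c e k)).add
        (hi.const_mul (2 * nc1 c e k))).add ((hi.pow 2).const_mul (p3 + 2 * nc2 c e k))).add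
        ((hi.pow 3).const_mul (2 * c + 2 * nc3 c k))
      refine (this.congr_deriv ?_).deriv
      simp only [add_sub_cancel_right]
      field_simp
      push_cast
      ring
    have hDf : deriv (fun w => P.eval w) = fun w => (derivative P).eval w := by
      funext w; exact P.deriv
    have hDDf : deriv (fun w => (derivative P).eval w) (s + b) =
      (derivative (derivative P)).eval (s + b) := (derivative P).deriv
    unfold potentialInv
    rw [hq', hDf, hDDf]
    have hS := div_expansion k hc hse
    -- With all `kᵢ = 1` the polynomial `N` is `p′`.
    have hU := div_expansion 1 hc hse
    rw [← hPs0, hsum, ← hd0, ← hd1, ← hd2, ← hd3] at hS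
    rw [← hPs0, ← hP', ← hd0, ← hd1, ← hd2, ← hd3] at hU
    have hsc : sc1 c e 1 = 8 * p3 := by
      rw [hp3]; simp only [sc1, nc2, Pi.one_apply]; ring
    simp only [Pi.one_apply, one_pow, one_mul, hsc] at hU
    have key := potential_core (lam := lam) (D := (derivative P).eval (s + b))
      (S0 := sc0 c e k) (R1 := sc1 c e k) (U0 := sc0 c e 1)
      (A := ∑ i, k i ^ 2 * (derivative P).eval (z i) / (s - e i))
      (B := ∑ i, (derivative P).eval (z i) / (s - e i)) hs (hPs s) hPne
      (by rw [hP', hp1, hp2, hp3]; simp only [nc3, Pi.one_apply]; ring) rfl hN3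
      (hS.trans (by rw [Fin.sum_univ_four]; ring)) (hU.trans (by rw [Fin.sum_univ_four]; ring))
    have hsecond : nc1 c e 1 + 2 * nc2 c e 1 * s + 3 * nc3 c 1 * s ^ 2 =
        2 * p2 + 6 * p3 * s + 12 * c * s ^ 2 := by
      rw [hp2, hp3]; simp only [nc3, Pi.one_apply]; ring
    have hws : ∀ i, s + b - z i = s - e i := fun i => by rw [hze]; ring
    simp only [add_sub_cancel_right, Fin.sum_univ_four, hws]
    rw [hPb, hdPb, hP'', hsecond]
    refine key.trans ?_
    simp only [Fin.sum_univ_four]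
    ring
end
end

section
/- Let n ≥ 4 be an integer, and let T be a second order operator with components p, q, r on ℂ∖{b}, where p is a degree-4 polynomial with distinct roots z₁, z₂, z₃, z₄ and b ∉ {z₁, z₂, z₃, z₄}. Suppose T preserves ℰ^{a,b}ₙ but does not preserve 𝒫ₙ. Set kᵢ = q(zᵢ)/(2p′(zᵢ)) − 1/2. Then p(b) ≠ 0, k₁+k₂+k₃+k₄ = −n, Σᵢ₌₁⁴ kᵢ²·p′(zᵢ)/(b−zᵢ)² = 0, a = Σᵢ₌₁⁴ kᵢ/(b−zᵢ), and there exists λ ∈ ℂ such that for every z ∉ {b, z₁, z₂, z₃, z₄} the potential invariant of T satisfies v(z) = −2p(b)/(z−b)² − p′(b)/(z−b) − Σᵢ₌₁⁴ (kᵢ² − 1/16)·p′(zᵢ)/(z−zᵢ) + λ. -/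
/-! Put `t = w - b`, so that `f ∈ ℰ^{a,b}` becomes the condition `f₁ + a f₀ = 0` on Taylor
coefficients, and `ℰₙ^{a,b}` has the basis `1 - a t, t², …, tⁿ`.

*Normal form* (`normal_form`). The images of `t²`, `t³`, `t⁴` satisfy a linear relation over `ℂ[t]`
obtained by eliminating `q` and `r`. Combined with the condition defining `ℰ`, it shows that `q`
has at most a simple pole at `t = 0`; the image of `1 - a t` then does the same for `r`. So
`t q = Q` and `t r = R` with polynomials `Q`, `R`, and comparing low coefficients yields `Q₀`, `Q₁`,
`R₀` together with one further relation `-a Q₂ + R₂ + a² p₁ = 0`. The degree bounds on the images of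
`tⁿ` and `tⁿ⁻¹` give `deg Q ≤ 4`, `deg R ≤ 3` and the values of `Q₄`, `R₂`, `R₃`. Only `R₁` stays
free; it is absorbed in the constant `λ`.

*Interpolation.* Since `Q(0) = -2 p(b)` and `Q(tᵢ) = (2kᵢ + 1) p'(zᵢ) tᵢ` with `tᵢ = zᵢ - b`, the
quartic `Q` is `-2 p + t ∑ᵢ (2kᵢ + 1) p / (t - tᵢ)`. Its top coefficient gives `∑ kᵢ = -n`, its
linear coefficient gives `a = ∑ kᵢ / (b - zᵢ)`, and the remaining relation becomes the quadratic
condition on the `kᵢ` (`cond_identity`). With `p`, `q`, `r` now explicit, the formula for the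
potential invariant is an identity of rational functions (`potential_identity`).

That `p(b) ≠ 0` holds because the `zᵢ` are all the roots of the quartic `p`. -/

open Polynomial

noncomputable section

/-! ### Normal form of operators preserving `ℰₙ` -/

lemma eq_of_eval_off_zero {F G : ℂ[X]} (h : ∀ t : ℂ, t ≠ 0 → F.eval t = G.eval t) : F = G :=
  Polynomial.eq_of_infinite_eval_eq F G
    (((Set.finite_singleton (0 : ℂ)).infinite_compl).mono fun t ht => h t ht)

/-- In the coordinate centred at `b`: if `p ∂² + q ∂ + r` preserves the polynomials `F` of degree at
most `n` with `F₁ + a F₀ = 0`, then `q` and `r` have at most simple poles at the origin, with the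
listed values of and relation between the coefficients of `Q = t q` and `R = t r`. -/
theorem normal_form (n : ℕ) (hn : 4 ≤ n) (p : ℂ[X]) (hp : p.natDegree ≤ 4) (a : ℂ) (q r : ℂ → ℂ)
    (h : ∀ F : ℂ[X], F.coeff 1 + a * F.coeff 0 = 0 → F.natDegree ≤ n →
      ∃ G : ℂ[X], G.coeff 1 + a * G.coeff 0 = 0 ∧ G.natDegree ≤ n ∧
        ∀ t : ℂ, t ≠ 0 → p.eval t * (derivative (derivative F)).eval t
          + q t * (derivative F).eval t + r t * F.eval t = G.eval t) :
    ∃ Q R : ℂ[X], (∀ t : ℂ, t ≠ 0 → q t * t = Q.eval t) ∧ (∀ t : ℂ, t ≠ 0 → r t * t = R.eval t) ∧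
      Q.natDegree ≤ 4 ∧ R.natDegree ≤ 3 ∧
      Q.coeff 0 = -2 * p.coeff 0 ∧ Q.coeff 1 = 2 * a * p.coeff 0 - p.coeff 1 ∧
      Q.coeff 4 = -2 * ((n : ℂ) - 1) * p.coeff 4 ∧
      R.coeff 0 = -2 * a * p.coeff 0 ∧
      R.coeff 2 = -(n : ℂ) * (n - 1) * p.coeff 3 - n * Q.coeff 3 ∧
      R.coeff 3 = (n : ℂ) * (n - 1) * p.coeff 4 ∧
      -a * Q.coeff 2 + R.coeff 2 + a ^ 2 * p.coeff 1 = 0 := by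
  have hpow : ∀ m : ℕ, m + 2 ≤ n → ∃ G : ℂ[X], G.coeff 1 + a * G.coeff 0 = 0 ∧ G.natDegree ≤ n ∧
      ∀ t : ℂ, t ≠ 0 → p.eval t * ((m + 2) * (m + 1) * t ^ m) + q t * ((m + 2) * t ^ (m + 1))
        + r t * t ^ (m + 2) = G.eval t := by
    intro m hm
    obtain ⟨G, h1, h2, h3⟩ := h (X ^ (m + 2)) (by simp [coeff_X_pow]) (by simpa using hm)
    refine ⟨G, h1, h2, fun t ht => ?_⟩
    rw [← h3 t ht]
    simp
    ring
  obtain ⟨G2, e2, d2, f2⟩ := hpow 0 (by omega)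
  obtain ⟨G3, e3, d3, f3⟩ := hpow 1 (by omega)
  obtain ⟨G4, e4, d4, f4⟩ := hpow 2 (by omega)
  obtain ⟨G0, e0, d0, f0⟩ := h (1 - C a * X) (by simp [coeff_one])
    ((by compute_degree : (1 - C a * X : ℂ[X]).natDegree ≤ 1).trans (by omega))
  -- The images of `X ^ 2`, `X ^ 3`, `X ^ 4` satisfy a linear relation, as `q` and `r` can be
  -- eliminated; since all three images lie in `ℰ`, this forces `X ^ 2 ∣ G3`.
  have r4 : G4 = X * (2 * (X * p) + 2 * G3 - X * G2) := by
    apply eq_of_eval_off_zero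
    intro t ht
    simp only [eval_mul, eval_add, eval_sub, eval_X, eval_ofNat, ← f2 t ht, ← f3 t ht, ← f4 t ht]
    push_cast
    ring
  have c40 : G4.coeff 0 = 0 := by rw [r4]; simp
  have c41 : G4.coeff 1 = 2 * G3.coeff 0 := by
    have := congrArg (fun F : ℂ[X] => F.coeff (0 + 1)) r4
    simpa only [coeff_X_mul, coeff_X_mul_zero, coeff_add, coeff_sub, coeff_ofNat_mul, zero_add,
      mul_zero, sub_zero] using this
  have c30 : G3.coeff 0 = 0 := by
    rw [c40, c41] at e4; linear_combination e4 / 2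
  have c31 : G3.coeff 1 = 0 := by rw [c30] at e3; linear_combination e3
  obtain ⟨H3, hH3⟩ : X ^ 2 ∣ G3 := by
    rw [X_pow_dvd_iff]
    intro d hd
    interval_cases d <;> assumption
  obtain ⟨Q, hQ⟩ : ∃ Q : ℂ[X], Q = X * H3 - G2 - C 4 * p := ⟨_, rfl⟩
  have hq : ∀ t : ℂ, t ≠ 0 → q t * t = Q.eval t := by
    intro t ht
    have h3 := f3 t ht
    rw [hH3] at h3
    have h2 := f2 t ht
    simp only [hQ, eval_mul, eval_sub, eval_X, eval_C, eval_pow] at h3 ⊢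
    apply mul_left_cancel₀ ht
    push_cast at h2 h3
    linear_combination h3 - t * h2
  -- the image of `1 - a X` shows that `r` has at most a simple pole
  have r0 : X ^ 2 * G0 = -(C a * (X * Q)) + (G2 - C 2 * p - C 2 * Q) * (1 - C a * X) := by
    apply eq_of_eval_off_zero
    intro t ht
    have h2 := f2 t ht
    have h0 := f0 t ht
    simp at h0
    simp only [eval_mul, eval_add, eval_sub, eval_X, eval_C, eval_pow, eval_neg, eval_one, ← h0,
      ← h2, ← hq t ht]
    push_cast
    ring
  have cN : (G2 - C 2 * p - C 2 * Q).coeff 0 = 0 := by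
    have := congrArg (fun F : ℂ[X] => F.coeff 0) r0
    simpa [mul_coeff_zero, eq_comm] using this
  obtain ⟨R, hR⟩ := X_dvd_iff.2 cN
  have hr : ∀ t : ℂ, t ≠ 0 → r t * t = R.eval t := by
    intro t ht
    have h2 := f2 t ht
    have h3 := congrArg (fun F : ℂ[X] => F.eval t) hR
    simp only [eval_mul, eval_sub, eval_X, eval_C, ← hq t ht, ← h2] at h3
    apply mul_left_cancel₀ ht
    push_cast at h3
    linear_combination h3
  have r0' : X * G0 = -(C a * Q) + R * (1 - C a * X) := by
    apply mul_left_cancel₀ (X_ne_zero (R := ℂ))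
    rw [hR] at r0
    linear_combination r0
  have r0'' : X * G0 = R - C a * Q - X * (C a * R) := by rw [r0']; ring
  have x0 := congrArg (fun F : ℂ[X] => F.coeff 0) r0''
  have x1 := congrArg (fun F : ℂ[X] => F.coeff (0 + 1)) r0''
  have x2 := congrArg (fun F : ℂ[X] => F.coeff (1 + 1)) r0''
  have y0 := congrArg (fun F : ℂ[X] => F.coeff 0) hQ
  have z0 := congrArg (fun F : ℂ[X] => F.coeff 0) hR
  have z1 := congrArg (fun F : ℂ[X] => F.coeff (0 + 1)) hR
  simp only [coeff_X_mul, coeff_X_mul_zero, coeff_sub, coeff_C_mul, zero_add, sub_zero,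
    Nat.reduceAdd] at x0 x1 x2 y0 z0 z1
  -- the coefficient of `t ^ (j + m)` in the image of `t ^ (m + 2)` vanishes when `j + m > n`
  have g : ∀ m : ℕ, m + 2 ≤ n → ∀ j, n < j + m →
      ((m : ℂ) + 2) * (m + 1) * p.coeff j + (m + 2) * Q.coeff j + (X * R).coeff j = 0 := by
    intro m hm j hj
    obtain ⟨G, -, dG, fG⟩ := hpow m hm
    have : G = (C (((m : ℂ) + 2) * (m + 1)) * p + C ((m : ℂ) + 2) * Q + X * R) * X ^ m := by
      apply eq_of_eval_off_zero
      intro t ht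
      simp only [← fG t ht, eval_mul, eval_add, eval_X, eval_C, eval_pow, ← hq t ht, ← hr t ht]
      ring
    have h0 : G.coeff (j + m) = 0 := coeff_eq_zero_of_natDegree_lt (by omega)
    rw [this, coeff_mul_X_pow] at h0
    simpa only [coeff_add, coeff_C_mul] using h0
  -- use the images of `t ^ n` and `t ^ (n - 1)`
  obtain ⟨m, rfl⟩ : ∃ m, n = m + 3 := ⟨n - 3, by omega⟩
  have gA : ∀ j, 3 ≤ j → ((m : ℂ) + 3) * (m + 2) * p.coeff j + (m + 3) * Q.coeff j
      + (X * R).coeff j = 0 := by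
    intro j hj
    have := g (m + 1) (by omega) j (by omega)
    push_cast at this
    linear_combination this
  have gB : ∀ j, 4 ≤ j → ((m : ℂ) + 2) * (m + 1) * p.coeff j + (m + 2) * Q.coeff j
      + (X * R).coeff j = 0 := fun j hj => g m (by omega) j (by omega)
  have gC : ∀ j, 4 ≤ j → Q.coeff j = -2 * (m + 2) * p.coeff j := by
    intro j hj
    linear_combination gA j (by omega) - gB j hj
  have pz : ∀ j, 4 < j → p.coeff j = 0 := fun j hj => coeff_eq_zero_of_natDegree_lt (by omega)
  have k0 : Q.coeff 0 = -2 * p.coeff 0 := by linear_combination (-1 / 3 : ℂ) * z0 + (1 / 3 : ℂ) * y0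
  have k1 : R.coeff 0 = -2 * a * p.coeff 0 := by linear_combination -x0 + a * k0
  have k2 : Q.coeff 1 = 2 * a * p.coeff 0 - p.coeff 1 := by
    linear_combination (1 / 2 : ℂ) * e2 - (1 / 2 : ℂ) * z1 - a / 2 * z0 - (1 / 2 : ℂ) * k1 - a * k0
  have A3 := gA 3 le_rfl
  have A4 := gA 4 (by omega)
  have C4 := gC 4 le_rfl
  rw [show 3 = 2 + 1 from rfl, coeff_X_mul] at A3
  rw [show 4 = 3 + 1 from rfl, coeff_X_mul] at A4
  simp only [Nat.reduceAdd] at A3 A4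
  refine ⟨Q, R, hq, hr, ?_, ?_, k0, k2, ?_, k1, ?_, ?_, ?_⟩
  · rw [natDegree_le_iff_coeff_eq_zero]
    intro j hj
    rw [gC j (by omega), pz j (by omega), mul_zero]
  · rw [natDegree_le_iff_coeff_eq_zero]
    intro j hj
    have := gA (j + 1) (by omega)
    rw [gC (j + 1) (by omega), pz (j + 1) (by omega), coeff_X_mul] at this
    linear_combination this
  · rw [C4]; push_cast; ring
  · push_cast; linear_combination A3
  · push_cast; linear_combination A4 - (m + 3 : ℂ) * C4
  · linear_combination e0 - x2 - a * x1 + a ^ 2 * k1 + a ^ 2 * k2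

/-! ### Rational identities in the roots -/

/-- The relation `-a Q₂ + R₂ + a² p₁ = 0` of the normal form is the quadratic condition
`∑ kᵢ² p'(tᵢ) / tᵢ² = 0`: after expressing everything through the roots `tᵢ` and the `kᵢ`, the two
sides agree identically. -/
lemma cond_identity (c a n t0 t1 t2 t3 k0 k1 k2 k3 : ℂ) (h0 : t0 ≠ 0) (h1 : t1 ≠ 0) (h2 : t2 ≠ 0)
  (h3 : t3 ≠ 0) (ha : a = -(k0/t0+k1/t1+k2/t2+k3/t3)) (hn : n = -(k0+k1+k2+k3))
  (p1 p3 Q2 Q3 : ℂ)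
  (hp1 : p1 = -c*(t1*t2*t3+t0*t2*t3+t0*t1*t3+t0*t1*t2))
  (hp3 : p3 = -c*(t0+t1+t2+t3))
  (hQ2 : Q2 = -2*c*(t0*t1+t0*t2+t0*t3+t1*t2+t1*t3+t2*t3) +
    c*((2*k0+1)*(t1*t2+t1*t3+t2*t3)+(2*k1+1)*(t0*t2+t0*t3+t2*t3)+(2*k2+1)*(t0*t1+t0*t3+t1*t3)
      +(2*k3+1)*(t0*t1+t0*t2+t1*t2)))
  (hQ3 : Q3 = 2*c*(t0+t1+t2+t3) -
    c*((2*k0+1)*(t1+t2+t3)+(2*k1+1)*(t0+t2+t3)+(2*k2+1)*(t0+t1+t3)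
      +(2*k3+1)*(t0+t1+t2))) :
  k0^2*(c*((t0-t1)*(t0-t2)*(t0-t3)))/t0^2 + k1^2*(c*((t1-t0)*(t1-t2)*(t1-t3)))/t1^2
  + k2^2*(c*((t2-t0)*(t2-t1)*(t2-t3)))/t2^2 + k3^2*(c*((t3-t0)*(t3-t1)*(t3-t2)))/t3^2 =
   -a * Q2 + (-n * (n - 1) * p3 - n * Q3) + a ^ 2 * p1 := by
  subst hQ2 hQ3 hp1 hp3 hn ha
  field_simp
  ring

/-- The potential invariant in the coordinate `t = w - b`. Here `p = p0 + p1 t + ⋯ + c t⁴` has the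
roots `tᵢ`, `t q = -2 p0 + Q1 t + ⋯ + Q4 t⁴`, and `ap0` stands for `a p0`. The constant term on the
right is the `t⁰`-coefficient of the Laurent polynomial part in the partial fraction expansion. -/
lemma potential_identity (c t t0 t1 t2 t3 k0 k1 k2 k3 R1 : ℂ) (ht : t ≠ 0)
  (h0 : t - t0 ≠ 0) (h1 : t - t1 ≠ 0) (h2 : t - t2 ≠ 0)
  (h3 : t - t3 ≠ 0) (_ : c ≠ 0)
  (n ap0 p0 p1 p2 p3 Q1 Q2 Q3 Q4 : ℂ)
  (hn : n = -(k0+k1+k2+k3))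
  (ha : ap0 = -c*(k0*(t1*t2*t3)+k1*(t0*t2*t3)+k2*(t0*t1*t3)+k3*(t0*t1*t2)))
  (hp0 : p0 = c*(t0*t1*t2*t3))
  (hp1 : p1 = -c*(t1*t2*t3+t0*t2*t3+t0*t1*t3+t0*t1*t2))
  (hp2 : p2 = c*(t0*t1+t0*t2+t0*t3+t1*t2+t1*t3+t2*t3))
  (hp3 : p3 = -c*(t0+t1+t2+t3))
  (hQ1 : Q1 = 2 * ap0 - p1)
  (hQ2 : Q2 = -2*c*(t0*t1+t0*t2+t0*t3+t1*t2+t1*t3+t2*t3) +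
    c*((2*k0+1)*(t1*t2+t1*t3+t2*t3)+(2*k1+1)*(t0*t2+t0*t3+t2*t3)+(2*k2+1)*(t0*t1+t0*t3+t1*t3)
      +(2*k3+1)*(t0*t1+t0*t2+t1*t2)))
  (hQ3 : Q3 = 2*c*(t0+t1+t2+t3) -
    c*((2*k0+1)*(t1+t2+t3)+(2*k1+1)*(t0+t2+t3)+(2*k2+1)*(t0+t1+t3)
      +(2*k3+1)*(t0+t1+t2)))
  (hQ4 : Q4 = -2 * (n-1)*c) :
  (-2*ap0/t + R1 + (-n * (n - 1) * p3 - n * Q3) * t + n*(n-1)*c*t^2)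
   - ((Q1 + 2*Q2*t+3*Q3*t^2+4*Q4*t^3)/t - (-2*p0+Q1*t+Q2*t^2+Q3*t^3+Q4*t^4)/t^2) / 2
   + (2*p2+6*p3*t+12*c*t^2)/4
   - ((-2*p0+Q1*t+Q2*t^2+Q3*t^3+Q4*t^4)/t - (p1+2*p2*t+3*p3*t^2+4*c*t^3))^2
      / (4*(c*((t-t0)*(t-t1)*(t-t2)*(t-t3))))
   + (p1+2*p2*t+3*p3*t^2+4*c*t^3)^2 / (16*(c*((t-t0)*(t-t1)*(t-t2)*(t-t3))))
  = -(2*p0)/t^2 - p1/t - ((k0^2-1/16)*(c*((t0-t1)*(t0-t2)*(t0-t3)))/(t-t0)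
  + (k1^2-1/16)*(c*((t1-t0)*(t1-t2)*(t1-t3)))/(t-t1)
  + (k2^2-1/16)*(c*((t2-t0)*(t2-t1)*(t2-t3)))/(t-t2)
  + (k3^2-1/16)*(c*((t3-t0)*(t3-t1)*(t3-t2)))/(t-t3)) +
   (R1 - p2*(3/8) + c*(t0^2+t1^2+t2^2+t3^2)/16
    + c*(k0*(t1*t2+t1*t3+t2*t3)+k1*(t0*t2+t0*t3+t2*t3)+k2*(t0*t1+t0*t3+t1*t3)+k3*(t0*t1+t0*t2+t1*t2))
    - c*(k0^2*(t0^2-(t1+t2+t3)*t0+(t1*t2+t1*t3+t2*t3)) + k1^2*(t1^2-(t0+t2+t3)*t1+(t0*t2+t0*t3+t2*t3))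
     + k2^2*(t2^2-(t0+t1+t3)*t2+(t0*t1+t0*t3+t1*t3))+k3^2*(t3^2-(t0+t1+t2)*t3+(t0*t1+t0*t2+t1*t2)))
    - 2*c*(k0*k1*(t2*t3)+k0*k2*(t1*t3)+k0*k3*(t1*t2)+k1*k2*(t0*t3)+k1*k3*(t0*t2)+k2*k3*(t0*t1))) := by
  subst hQ1 hQ2 hQ3 hQ4 hp0 hp1 hp2 hp3 hn ha
  field_simp
  ring

/-! ### Quartic polynomials -/

lemma quartic_eval {F : ℂ[X]} (hF : F.natDegree ≤ 4) (x : ℂ) :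
    F.eval x = F.coeff 0 + F.coeff 1 * x + F.coeff 2 * x ^ 2 + F.coeff 3 * x ^ 3
      + F.coeff 4 * x ^ 4 := by
  rw [eval_eq_sum_range' (Nat.lt_succ_of_le hF)]
  simp [Finset.sum_range_succ]

lemma quartic_coeff (c0 c1 c2 c3 c4 : ℂ) {F : ℂ[X]}
    (h : F = C c0 + C c1 * X + C c2 * X ^ 2 + C c3 * X ^ 3 + C c4 * X ^ 4) :
    F.coeff 0 = c0 ∧ F.coeff 1 = c1 ∧ F.coeff 2 = c2 ∧ F.coeff 3 = c3 ∧ F.coeff 4 = c4 := by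
  subst h
  simp [coeff_X, coeff_C]

/-- Four distinct roots factor a quartic: both sides have the same leading term, so their difference
has degree below four. -/
lemma eq_prod_of_roots {P : ℂ[X]} (hdeg : P.degree = 4) {z : Fin 4 → ℂ}
    (hinj : Function.Injective z) (hroot : ∀ i, P.eval (z i) = 0) :
    P = C P.leadingCoeff * ((X - C (z 0)) * (X - C (z 1)) * (X - C (z 2)) * (X - C (z 3))) := by
  have hm : ((X - C (z 0)) * (X - C (z 1)) * (X - C (z 2)) * (X - C (z 3)) : ℂ[X]).Monic := by
    monicity!
  have hd : ((X - C (z 0)) * (X - C (z 1)) * (X - C (z 2)) * (X - C (z 3)) : ℂ[X]).degree = 4 := by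
    compute_degree!
  have hc : P.leadingCoeff ≠ 0 := by
    rw [Ne, leadingCoeff_eq_zero]; rintro rfl; simp at hdeg
  apply eq_of_degree_sub_lt_of_eval_index_eq (s := (Finset.univ : Finset (Fin 4))) (v := z)
    hinj.injOn
  · refine lt_of_lt_of_eq (degree_sub_lt_left ?_ ?_ ?_) (by simp [hdeg])
    · rw [degree_C_mul hc, hd, hdeg]
    · rintro rfl; simp at hdeg
    · simp [leadingCoeff_mul, hm.leadingCoeff]
  · intro i _
    rw [hroot]
    fin_cases i <;> simp

/-! ### The structure theorem -/

/-- converse: if `T` (with `p` of degree 4 with distinct roots `zᵢ`,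
`b ∉ {zᵢ}`) preserves `ℰ^{a,b}ₙ` but not `𝒫ₙ`, and `kᵢ = q(zᵢ)/(2p′(zᵢ)) − 1/2`, then
`p(b) ≠ 0`, `Σkᵢ = −n`, `Σᵢ kᵢ²·p′(zᵢ)/(b−zᵢ)² = 0`, `a = Σᵢ kᵢ/(b−zᵢ)`, and the
potential invariant has the stated form for some constant `λ`. -/
theorem stmt16 (n : ℕ) (hn : 4 ≤ n) (P : Polynomial ℂ) (hdeg : P.degree = 4)
    (z : Fin 4 → ℂ) (hinj : Function.Injective z) (hroot : ∀ i, P.eval (z i) = 0)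
    (a b : ℂ) (hbz : ∀ i, b ≠ z i) (q r : ℂ → ℂ)
    (hpres : SOPreserves P.eval q r {w : ℂ | w ≠ b} (EabN a b n))
    (hnot : ¬ SOPreserves P.eval q r {w : ℂ | w ≠ b} (Pn n))
    (k : Fin 4 → ℂ)
    (hk : ∀ i, k i = q (z i) / (2 * (Polynomial.derivative P).eval (z i)) - 1 / 2) :
    P.eval b ≠ 0 ∧
    k 0 + k 1 + k 2 + k 3 = -(n : ℂ) ∧
    (∑ i, k i ^ 2 * (Polynomial.derivative P).eval (z i) / (b - z i) ^ 2) = 0 ∧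
    a = (∑ i, k i / (b - z i)) ∧
    ∃ lam : ℂ, ∀ w : ℂ, w ≠ b → (∀ i, w ≠ z i) →
      potentialInv P.eval q r w =
        -(2 * P.eval b) / (w - b) ^ 2 - (Polynomial.derivative P).eval b / (w - b)
          - (∑ i, (k i ^ 2 - 1 / 16) * (Polynomial.derivative P).eval (z i) / (w - z i))
          + lam := by
  obtain ⟨c, hcP⟩ : ∃ c, c = P.leadingCoeff := ⟨_, rfl⟩
  have hc : c ≠ 0 := by
    rw [hcP, Ne, leadingCoeff_eq_zero]; rintro rfl; simp at hdeg
  have hP := eq_prod_of_roots hdeg hinj hroot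
  rw [← hcP] at hP
  have hnd : P.natDegree = 4 := natDegree_eq_of_degree_eq_some hdeg
  -- translate `b` to the origin
  obtain ⟨t, ht⟩ : ∃ t : Fin 4 → ℂ, ∀ i, z i = t i + b := ⟨fun i => z i - b, by simp⟩
  have ht0 : ∀ i, t i ≠ 0 := fun i hi => hbz i (by rw [ht, hi, zero_add])
  have htinj : Function.Injective t := fun i j hij => hinj (by rw [ht, ht, hij])
  obtain ⟨Q, R, hq, hr, hQd, hRd, hQ0, hQ1, hQ4, hR0, hR2, hR3, hcond⟩ :=
    normal_form n hn (taylor b P) (by rw [natDegree_taylor, hnd]) a (fun s => q (s + b))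
      (fun s => r (s + b)) (by
        intro F hF hFn
        have hF' : taylor b (taylor (-b) F) = F := by simp [taylor_taylor]
        obtain ⟨G, ⟨hG1, hG2⟩, hG⟩ := hpres (taylor (-b) F) ⟨by
            change _ = _
            rw [← taylor_coeff_one, ← taylor_coeff_zero, hF', hF], by
            change (taylor (-b) F).degree ≤ (n : ℕ)
            rw [degree_taylor]
            exact degree_le_of_natDegree_le hFn⟩
        change _ = _ at hG1
        change G.degree ≤ (n : ℕ) at hG2
        refine ⟨taylor b G, by rw [taylor_coeff_zero, taylor_coeff_one, hG1],
          by rw [natDegree_taylor]; exact natDegree_le_of_degree_le hG2, fun s hs => ?_⟩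
        have := hG (s + b) (by simpa using hs)
        rw [SOApply] at this
        rw [taylor_eval, taylor_eval, ← this]
        simp [taylor_apply, derivative_comp])
  obtain ⟨p0, hp0⟩ : ∃ p0, p0 = c * (t 0 * t 1 * t 2 * t 3) := ⟨_, rfl⟩
  obtain ⟨p1, hp1⟩ : ∃ p1, p1 = -c * (t 1 * t 2 * t 3 + t 0 * t 2 * t 3 + t 0 * t 1 * t 3
    + t 0 * t 1 * t 2) := ⟨_, rfl⟩
  obtain ⟨p2, hp2⟩ : ∃ p2, p2 = c * (t 0 * t 1 + t 0 * t 2 + t 0 * t 3 + t 1 * t 2 + t 1 * t 3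
    + t 2 * t 3) := ⟨_, rfl⟩
  obtain ⟨p3, hp3⟩ : ∃ p3, p3 = -c * (t 0 + t 1 + t 2 + t 3) := ⟨_, rfl⟩
  have hp0n : p0 ≠ 0 := by
    rw [hp0]
    exact mul_ne_zero hc (mul_ne_zero (mul_ne_zero (mul_ne_zero (ht0 0) (ht0 1)) (ht0 2)) (ht0 3))
  have hpT : taylor b P = C p0 + C p1 * X + C p2 * X ^ 2 + C p3 * X ^ 3 + C c * X ^ 4 := by
    rw [hP, taylor_apply, hp0, hp1, hp2, hp3]
    simp only [ht, add_comp, mul_comp, sub_comp, X_comp, C_comp, C_add, C_mul, C_neg]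
    ring
  obtain ⟨e0, e1, e2, e3, e4⟩ := quartic_coeff p0 p1 p2 p3 c hpT
  rw [e0] at hQ0 hQ1 hR0
  rw [e1] at hQ1 hcond
  rw [e3] at hR2
  rw [e4] at hQ4 hR3
  have hPe : ∀ w, P.eval w
      = c * ((w - b - t 0) * (w - b - t 1) * (w - b - t 2) * (w - b - t 3)) := by
    intro w
    rw [hP]
    simp only [ht, eval_mul, eval_sub, eval_X, eval_C]
    ring
  have hP' : ∀ w, (derivative P).eval w = p1 + 2 * p2 * (w - b) + 3 * p3 * (w - b) ^ 2
      + 4 * c * (w - b) ^ 3 := by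
    intro w
    have := congrArg (fun F : ℂ[X] => (derivative F).eval (w - b)) hpT
    simp [taylor_apply, derivative_comp] at this
    rw [this]
    ring
  have hP'' : ∀ w, (derivative (derivative P)).eval w = 2 * p2 + 6 * p3 * (w - b)
      + 12 * c * (w - b) ^ 2 := by
    intro w
    have := congrArg (fun F : ℂ[X] => (derivative (derivative F)).eval (w - b)) hpT
    simp [taylor_apply, derivative_comp] at this
    rw [this]
    ring
  have d0 : (derivative P).eval (z 0) = c * ((t 0 - t 1) * (t 0 - t 2) * (t 0 - t 3)) := by
    rw [hP', ht, hp1, hp2, hp3]; ring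
  have d1 : (derivative P).eval (z 1) = c * ((t 1 - t 0) * (t 1 - t 2) * (t 1 - t 3)) := by
    rw [hP', ht, hp1, hp2, hp3]; ring
  have d2 : (derivative P).eval (z 2) = c * ((t 2 - t 0) * (t 2 - t 1) * (t 2 - t 3)) := by
    rw [hP', ht, hp1, hp2, hp3]; ring
  have d3 : (derivative P).eval (z 3) = c * ((t 3 - t 0) * (t 3 - t 1) * (t 3 - t 2)) := by
    rw [hP', ht, hp1, hp2, hp3]; ring
  have hne : ∀ i j, i ≠ j → t i - t j ≠ 0 := fun i j hij => sub_ne_zero.2 (htinj.ne hij)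
  have hdne : ∀ i, (derivative P).eval (z i) ≠ 0 := by
    intro i
    fin_cases i <;> simp [d0, d1, d2, d3, hc, hne]
  have hQt : ∀ i, Q.eval (t i) = (2 * k i + 1) * (derivative P).eval (z i) * t i := by
    intro i
    rw [← hq _ (ht0 i), ← ht, hk]
    have := hdne i
    field_simp
    ring
  -- Lagrange interpolation: `Q` is determined by its values at `0` and the four roots
  have hQe : Q = C (-2 * p0) + C (-2 * p1 - c * ((2 * k 0 + 1) * (t 1 * t 2 * t 3)
        + (2 * k 1 + 1) * (t 0 * t 2 * t 3) + (2 * k 2 + 1) * (t 0 * t 1 * t 3)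
        + (2 * k 3 + 1) * (t 0 * t 1 * t 2))) * X
      + C (-2*c*(t 0*t 1+t 0*t 2+t 0*t 3+t 1*t 2+t 1*t 3+t 2*t 3) +
        c*((2*k 0+1)*(t 1*t 2+t 1*t 3+t 2*t 3)+(2*k 1+1)*(t 0*t 2+t 0*t 3+t 2*t 3)
          +(2*k 2+1)*(t 0*t 1+t 0*t 3+t 1*t 3)+(2*k 3+1)*(t 0*t 1+t 0*t 2+t 1*t 2))) * X ^ 2
      + C (2*c*(t 0+t 1+t 2+t 3) - c*((2*k 0+1)*(t 1+t 2+t 3)+(2*k 1+1)*(t 0+t 2+t 3)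
          +(2*k 2+1)*(t 0+t 1+t 3)+(2*k 3+1)*(t 0+t 1+t 2))) * X ^ 3
      + C (-2 * c + c * ((2 * k 0 + 1) + (2 * k 1 + 1) + (2 * k 2 + 1) + (2 * k 3 + 1))) * X ^ 4 := by
    have hv : Function.Injective (Fin.cons 0 t : Fin 5 → ℂ) := by
      rw [Fin.cons_injective_iff]
      exact ⟨fun ⟨i, hi⟩ => ht0 i hi, htinj⟩
    apply eq_of_degree_sub_lt_of_eval_index_eq (s := (Finset.univ : Finset (Fin 5)))
      (v := Fin.cons 0 t) hv.injOn
    · rw [Finset.card_univ, Fintype.card_fin]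
      refine lt_of_le_of_lt (degree_sub_le_of_le (a := 4) (b := 4) ?_ ?_) (by norm_num)
      · exact degree_le_of_natDegree_le hQd
      · compute_degree
    · intro i _
      refine Fin.cases ?_ (fun j => ?_) i
      · simp [← coeff_zero_eq_eval_zero, hQ0]
      · rw [Fin.cons_succ, hQt]
        simp only [eval_add, eval_mul, eval_C, eval_X, eval_pow, hp0, hp1]
        fin_cases j
        · simp only [Fin.zero_eta, d0]; ring
        · simp only [Fin.mk_one, d1]; ring
        · simp only [Fin.reduceFinMk, d2]; ring
        · simp only [Fin.reduceFinMk, d3]; ring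
  obtain ⟨-, f1, f2, f3, f4⟩ := quartic_coeff _ _ _ _ _ hQe
  have hnk : (n : ℂ) = -(k 0 + k 1 + k 2 + k 3) := by
    apply mul_left_cancel₀ hc
    linear_combination (1 / 2 : ℂ) * hQ4 - (1 / 2 : ℂ) * f4
  have hap : a * p0 = -c * (k 0 * (t 1 * t 2 * t 3) + k 1 * (t 0 * t 2 * t 3)
      + k 2 * (t 0 * t 1 * t 3) + k 3 * (t 0 * t 1 * t 2)) := by
    linear_combination (-1 / 2 : ℂ) * hQ1 + (1 / 2 : ℂ) * f1 - (1 / 2 : ℂ) * hp1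
  have h0 := ht0 0
  have h1 := ht0 1
  have h2 := ht0 2
  have h3 := ht0 3
  have ha : a = -(k 0 / t 0 + k 1 / t 1 + k 2 / t 2 + k 3 / t 3) := by
    apply mul_right_cancel₀ hp0n
    rw [hap, hp0]
    field_simp
  have hbt : ∀ i, b - z i = -t i := fun i => by rw [ht]; ring
  have hPb : P.eval b = p0 := by rw [hPe, hp0]; ring
  refine ⟨by rwa [hPb], by rw [hnk]; ring, ?_, ?_, ?_⟩
  · rw [hR2] at hcond
    simp only [Fin.sum_univ_four, hbt, neg_sq, d0, d1, d2, d3]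
    rw [cond_identity c a n _ _ _ _ _ _ _ _ h0 h1 h2 h3 ha hnk p1 p3 _ _ hp1 hp3 f2 f3]
    exact hcond
  · simp only [Fin.sum_univ_four, hbt, div_neg]
    rw [ha]; ring
  -- the witness for `λ` is the constant term in `potential_identity`
  · refine ⟨(R.coeff 1 - p2*(3/8) + c*(t 0^2+t 1^2+t 2^2+t 3^2)/16
        + c*(k 0*(t 1*t 2+t 1*t 3+t 2*t 3)+k 1*(t 0*t 2+t 0*t 3+t 2*t 3)
          +k 2*(t 0*t 1+t 0*t 3+t 1*t 3)+k 3*(t 0*t 1+t 0*t 2+t 1*t 2))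
        - c*(k 0^2*(t 0^2-(t 1+t 2+t 3)*t 0+(t 1*t 2+t 1*t 3+t 2*t 3))
          + k 1^2*(t 1^2-(t 0+t 2+t 3)*t 1+(t 0*t 2+t 0*t 3+t 2*t 3))
         + k 2^2*(t 2^2-(t 0+t 1+t 3)*t 2+(t 0*t 1+t 0*t 3+t 1*t 3))
          + k 3^2*(t 3^2-(t 0+t 1+t 2)*t 3+(t 0*t 1+t 0*t 2+t 1*t 2)))
        - 2*c*(k 0*k 1*(t 2*t 3)+k 0*k 2*(t 1*t 3)+k 0*k 3*(t 1*t 2)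
          +k 1*k 2*(t 0*t 3)+k 1*k 3*(t 0*t 2)+k 2*k 3*(t 0*t 1))),
      fun w hw hwz => ?_⟩
    have hx : w - b ≠ 0 := sub_ne_zero.2 hw
    have hwt : ∀ i, w - z i = w - b - t i := fun i => by rw [ht]; ring
    have hxt : ∀ i, w - b - t i ≠ 0 := fun i => by rw [← hwt]; exact sub_ne_zero.2 (hwz i)
    have hrw : r w = -2 * (a * p0) / (w - b) + R.coeff 1
        + (-(n : ℂ) * (n - 1) * p3 - n * Q.coeff 3) * (w - b) + n * (n - 1) * c * (w - b) ^ 2 := by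
      have := hr (w - b) hx
      rw [quartic_eval (hRd.trans (by norm_num)), hR0, hR2, hR3, coeff_eq_zero_of_natDegree_lt
        (show R.natDegree < 4 by omega), sub_add_cancel] at this
      field_simp
      linear_combination this
    have hQev : ∀ x, Q.eval x = -2 * p0 + Q.coeff 1 * x + Q.coeff 2 * x ^ 2 + Q.coeff 3 * x ^ 3
        + Q.coeff 4 * x ^ 4 := fun x => by rw [quartic_eval hQd, hQ0]
    have hQdev : ∀ x, (derivative Q).eval x = Q.coeff 1 + 2 * Q.coeff 2 * x
        + 3 * Q.coeff 3 * x ^ 2 + 4 * Q.coeff 4 * x ^ 3 := fun x => by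
      rw [quartic_eval ((natDegree_derivative_le Q).trans (by omega))]
      simp only [coeff_derivative, coeff_eq_zero_of_natDegree_lt (show Q.natDegree < 4 + 1 by omega)]
      push_cast
      ring
    have hqw : ∀ s, s ≠ b → q s = Q.eval (s - b) / (s - b) := by
      intro s hs
      have hs' : s - b ≠ 0 := sub_ne_zero.2 hs
      rw [← hq _ hs', sub_add_cancel]
      field_simp
    have hdq : deriv q w = (derivative Q).eval (w - b) / (w - b) - Q.eval (w - b) / (w - b) ^ 2 := by
      have hev : q =ᶠ[nhds w] fun s => Q.eval (s - b) / (s - b) := by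
        filter_upwards [isOpen_ne.mem_nhds hw] with s hs using hqw s hs
      rw [hev.deriv_eq]
      have hsub : HasDerivAt (fun s : ℂ => s - b) 1 w := (hasDerivAt_id w).sub_const b
      have hQc : HasDerivAt (fun s : ℂ => Q.eval (s - b)) ((derivative Q).eval (w - b) * 1) w :=
        HasDerivAt.comp (h₂ := fun s => Q.eval s) w (Q.hasDerivAt (w - b)) hsub
      rw [(hQc.fun_div hsub hx).deriv]
      field_simp
    have hdP : deriv (fun s => P.eval s) = fun s => (derivative P).eval s := by
      funext s; exact P.deriv
    have hddP : deriv (fun s => (derivative P).eval s) w = (derivative (derivative P)).eval w :=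
      (derivative P).deriv
    have hPb' : (derivative P).eval b = p1 := by rw [hP']; ring
    rw [potentialInv, hdP, hddP, hdq, hqw w hw, hrw, hPb, hPe, hP'', hPb', hQev, hQdev]
    simp only [hP' w, Fin.sum_univ_four, hwt, d0, d1, d2, d3]
    have key := potential_identity c (w - b) _ _ _ _ (k 0) (k 1) (k 2) (k 3) (R.coeff 1) hx (hxt 0)
      (hxt 1) (hxt 2) (hxt 3) hc n (a * p0) p0 p1 p2 p3 (Q.coeff 1) _ _ _ hnk hap hp0 hp1 hp2 hp3
      (by rw [hQ1]; ring) f2 f3 hQ4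
    exact key
end
end

section
/- Let T be a second order operator with components p, q, r on ℂ∖{b}, where p is a degree-4 polynomial with distinct roots, and let a, b ∈ ℂ. (i) If T preserves ℰ^{a,b}, then p(b) = 0 if and only if T maps every polynomial to a function agreeing with a polynomial. (ii) If n ≥ 4, b ≠ 0, and T preserves ℰ^{a,b}ₙ, then p(b) = 0 if and only if T preserves 𝒫ₙ. -/
/-!
Put `Y = X - b`. The space `ℰ^{a,b}` contains `1 - aY` and `Y ^ k` for all `k ≥ 2`. The images of
`Y ^ 2` and `Y ^ 3` express `Y ^ 2 q` and `Y ^ 3 r` as polynomials; membership of the images of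
`Y ^ 3`, `Y ^ 4` in `ℰ^{a,b}` and regularity of the images of `Y ^ 2`, `1 - aY` then lower the
poles: `q` and `r` have at most simple poles at `b`, with residues `-2 P(b)` and `-2a P(b)`
(`simple_poles`). Hence `P(b) = 0` exactly when `q` and `r` are polynomials off `b`
(`coeffs_polynomial_iff`), i.e. exactly when `T[1] = r` and `T[X] = q + X r` are. This gives (i) and
one direction of (ii). For the other direction of (ii), `𝒫ₙ = ℰ^{a,b}ₙ ⊕ ℂ Y`, and the degree
bounds on the images of `Y ^ n` and `Y ^ (n - 1)` force `deg q ≤ 3` and `deg r ≤ 2`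
(`degree_bounds`), so `T[Y] = q + Y r` has degree at most `3 ≤ n`.
-/

open Polynomial

noncomputable section

/-! ### Polynomials near `b` and test functions in `ℰ^{a,b}` -/

lemma eq_of_eval_off {b : ℂ} {f g : Polynomial ℂ} (h : ∀ w, w ≠ b → f.eval w = g.eval w) :
    f = g :=
  Polynomial.eq_of_infinite_eval_eq f g
    ((Set.finite_singleton b).infinite_compl.mono fun w hw => h w hw)

lemma exists_factor_s17 {b : ℂ} {f : Polynomial ℂ} (h : f.eval b = 0) :
    ∃ g : Polynomial ℂ, f = (X - C b) * g :=
  dvd_iff_isRoot.mpr h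

/-- An element of `ℰ^{a,b}` vanishing at `b` vanishes there to second order. -/
lemma factor_eval_eq_zero {a b : ℂ} {g h : Polynomial ℂ} (hg : g ∈ Eab a b)
    (e : g = (X - C b) * h) : h.eval b = 0 := by
  subst e
  simpa [Eab] using hg

lemma shift_pow_mem (a b : ℂ) (k : ℕ) : (X - C b) ^ (k + 2) ∈ Eab a b := by
  simp [Eab, derivative_pow]

lemma one_sub_mem (a b : ℂ) : (1 - C a * (X - C b)) ∈ Eab a b := by
  simp [Eab]

lemma apply_shift_pow (p q r : ℂ → ℂ) (b : ℂ) (k : ℕ) (w : ℂ) :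
    SOApply p q r ((X - C b) ^ (k + 2)) w = (w - b) ^ k *
      ((k + 2) * (k + 1) * p w + (k + 2) * (w - b) * q w + (w - b) ^ 2 * r w) := by
  simp [SOApply, derivative_pow]
  ring

/-! ### Poles of the coefficients at `b` -/

/-- The coefficients `q`, `r` have at most simple poles at `b`, with residues `-2 P(b)` and
`-2a P(b)`. Only test polynomials of degree at most `4` are used, so the lemma applies to the
truncated spaces with `n ≥ 4` as well. -/
lemma simple_poles {P : Polynomial ℂ} {a b : ℂ} {q r : ℂ → ℂ}
    (H : ∀ f ∈ Eab a b, f.degree ≤ 4 →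
      ∃ g ∈ Eab a b, ∀ w, w ≠ b → SOApply P.eval q r f w = g.eval w) :
    ∃ Q R : Polynomial ℂ, (∀ w, w ≠ b → (w - b) * q w = Q.eval w) ∧
      (∀ w, w ≠ b → (w - b) * r w = R.eval w) ∧
      Q.eval b = -2 * P.eval b ∧ R.eval b = -2 * a * P.eval b := by
  have hd : ∀ k : ℕ, k ≤ 2 → ((X - C b) ^ (k + 2)).degree ≤ 4 := fun k hk => by
    rw [degree_pow, degree_X_sub_C]
    interval_cases k <;> norm_num
  have hd1 : (1 - C a * (X - C b)).degree ≤ 4 := by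
    compute_degree
    all_goals norm_num
  obtain ⟨g1, m1, e1⟩ := H _ (one_sub_mem a b) hd1
  obtain ⟨g2, -, e2⟩ := H _ (shift_pow_mem a b 0) (hd 0 (by norm_num))
  obtain ⟨g3, m3, e3⟩ := H _ (shift_pow_mem a b 1) (hd 1 (by norm_num))
  obtain ⟨g4, m4, e4⟩ := H _ (shift_pow_mem a b 2) (hd 2 (by norm_num))
  simp only [apply_shift_pow] at e2 e3 e4
  norm_num at e2 e3 e4
  replace e1 : ∀ w, w ≠ b → -a * q w + (1 - a * (w - b)) * r w = g1.eval w := fun w hw => by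
    rw [← e1 w hw]
    simp [SOApply]
    ring
  have hY : ∀ w, w ≠ b → w - b ≠ 0 := fun w hw => sub_ne_zero.mpr hw
  -- `A = Y ^ 2 q` and `B = Y ^ 3 r`.
  obtain ⟨A, hA⟩ : ∃ A : Polynomial ℂ, ∀ w, w ≠ b → (w - b) ^ 2 * q w = A.eval w :=
    ⟨g3 - (X - C b) * g2 - 4 * (X - C b) * P, fun w hw => by
      simp [← e2 w hw, ← e3 w hw]
      ring⟩
  obtain ⟨B, hB⟩ : ∃ B : Polynomial ℂ, ∀ w, w ≠ b → (w - b) ^ 3 * r w = B.eval w :=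
    ⟨g3 - 6 * (X - C b) * P - 3 * A, fun w hw => by
      simp [← hA w hw, ← e3 w hw]
      ring⟩
  have i2 : (X - C b) * g2 = 2 * (X - C b) * P + 2 * A + B := eq_of_eval_off (b := b) fun w hw => by
    simp [← hA w hw, ← hB w hw, ← e2 w hw]
    ring
  have i4 : g4 = (X - C b) * (12 * (X - C b) * P + 4 * A + B) :=
    eq_of_eval_off (b := b) fun w hw => by
      simp [← hA w hw, ← hB w hw, ← e4 w hw]
      ring
  have j2 := congrArg (eval b) i2
  have j4 := factor_eval_eq_zero m4 i4
  simp at j2 j4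
  obtain ⟨A1, rfl⟩ := exists_factor_s17 (b := b) (f := A) (by linear_combination (j4 + j2) / 2)
  obtain ⟨B1, rfl⟩ := exists_factor_s17 (b := b) (f := B) (by linear_combination -j4 - 2 * j2)
  have hA1 : ∀ w, w ≠ b → (w - b) * q w = A1.eval w := fun w hw => by
    apply mul_left_cancel₀ (hY w hw)
    have := hA w hw
    simp at this
    linear_combination this
  have hB1 : ∀ w, w ≠ b → (w - b) ^ 2 * r w = B1.eval w := fun w hw => by
    apply mul_left_cancel₀ (hY w hw)
    have := hB w hw
    simp at this
    linear_combination this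
  have i3 : g3 = (X - C b) * (6 * P + 3 * A1 + B1) := eq_of_eval_off (b := b) fun w hw => by
    simp [← hA1 w hw, ← hB1 w hw, ← e3 w hw]
    left
    ring
  have i1 : (X - C b) ^ 2 * g1 = -C a * (X - C b) * A1 + (1 - C a * (X - C b)) * B1 :=
    eq_of_eval_off (b := b) fun w hw => by
      rw [eval_mul, eval_add, eval_mul, eval_mul, eval_mul, ← hA1 w hw, ← hB1 w hw, ← e1 w hw]
      simp only [eval_pow, eval_sub, eval_X, eval_C, eval_mul, eval_neg, eval_one]
      ring
  have j3 := factor_eval_eq_zero m3 i3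
  have j1 := congrArg (eval b) i1
  simp at j1 j3
  obtain ⟨B2, rfl⟩ := exists_factor_s17 (b := b) (f := B1) j1.symm
  have hB2 : ∀ w, w ≠ b → (w - b) * r w = B2.eval w := fun w hw => by
    apply mul_left_cancel₀ (hY w hw)
    have := hB1 w hw
    simp at this
    linear_combination this
  have i0 : (X - C b) * g1 = -C a * A1 + (1 - C a * (X - C b)) * B2 :=
    eq_of_eval_off (b := b) fun w hw => by
      simp [← hA1 w hw, ← hB2 w hw, ← e1 w hw]
      ring
  have j0 := congrArg (eval b) i0
  simp at j0 j3
  exact ⟨A1, B2, hA1, hB2, by linear_combination j3 / 3, by linear_combination -j0 + a * j3 / 3⟩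

lemma coeffs_polynomial_iff {P : Polynomial ℂ} {a b : ℂ} {q r : ℂ → ℂ}
    (H : ∀ f ∈ Eab a b, f.degree ≤ 4 →
      ∃ g ∈ Eab a b, ∀ w, w ≠ b → SOApply P.eval q r f w = g.eval w) :
    P.eval b = 0 ↔ ∃ Q R : Polynomial ℂ, ∀ w, w ≠ b → q w = Q.eval w ∧ r w = R.eval w := by
  obtain ⟨Q, R, hQ, hR, hQb, hRb⟩ := simple_poles H
  constructor
  · intro h0
    obtain ⟨Q1, rfl⟩ := exists_factor_s17 (b := b) (f := Q) (by simp [hQb, h0])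
    obtain ⟨R1, rfl⟩ := exists_factor_s17 (b := b) (f := R) (by simp [hRb, h0])
    refine ⟨Q1, R1, fun w hw => ⟨?_, ?_⟩⟩ <;> apply mul_left_cancel₀ (sub_ne_zero.mpr hw)
    · simpa using hQ w hw
    · simpa using hR w hw
  · rintro ⟨Q1, R1, h⟩
    have : Q = (X - C b) * Q1 := eq_of_eval_off (b := b) fun w hw => by
      simp [← hQ w hw, (h w hw).1]
    subst this
    simpa using hQb

/-- Regularity of `T[1]` and `T[X]` alone makes `q` and `r` polynomials. -/
lemma coeffs_of_apply {p q r : ℂ → ℂ} {b : ℂ} {g0 g1 : Polynomial ℂ}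
    (h0 : ∀ w, w ≠ b → SOApply p q r 1 w = g0.eval w)
    (h1 : ∀ w, w ≠ b → SOApply p q r X w = g1.eval w) :
    ∃ Q R : Polynomial ℂ, ∀ w, w ≠ b → q w = Q.eval w ∧ r w = R.eval w := by
  refine ⟨g1 - X * g0, g0, fun w hw => ?_⟩
  have e0 := h0 w hw
  have e1 := h1 w hw
  simp [SOApply] at e0 e1
  refine ⟨?_, e0⟩
  simp [← e0, ← e1]
  ring

/-! ### Degree bounds on the coefficients -/

lemma natDegree_sub_le_of_both {f g : Polynomial ℂ} {m : ℕ} (hf : f.natDegree ≤ m)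
    (hg : g.natDegree ≤ m) : (f - g).natDegree ≤ m :=
  (natDegree_sub_le f g).trans (max_le hf hg)

lemma natDegree_of_shift_mul {b : ℂ} {f : Polynomial ℂ} {k m : ℕ}
    (h : ((X - C b) ^ k * f).natDegree ≤ m + k) : f.natDegree ≤ m := by
  by_cases hf : f = 0
  · simp [hf]
  · rw [((monic_X_sub_C b).pow k).natDegree_mul' hf, natDegree_pow, natDegree_X_sub_C] at h
    omega

/-- The images of the top two powers `Y ^ (m + 4)`, `Y ^ (m + 3)` of `Y = X - b` differ, after
removing their common powers of `Y`, by `2 (m + 3) P + Y Q`, which bounds `deg Q` and then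
`deg R`. -/
lemma degree_bounds {P Q R : Polynomial ℂ} {b : ℂ} {m : ℕ} (hP : P.natDegree ≤ 4)
    (h4 : SOApply P.eval Q.eval R.eval ((X - C b) ^ (m + 4)) ∈
      (fun g w => eval w g) '' Pn (m + 4))
    (h3 : SOApply P.eval Q.eval R.eval ((X - C b) ^ (m + 3)) ∈
      (fun g w => eval w g) '' Pn (m + 4)) :
    Q.natDegree ≤ 3 ∧ R.natDegree ≤ 2 := by
  obtain ⟨g4, d4, e4⟩ := h4
  obtain ⟨g3, d3, e3⟩ := h3
  have key : ∀ (k : ℕ) (g : Polynomial ℂ),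
      (fun w => eval w g) = SOApply P.eval Q.eval R.eval ((X - C b) ^ (k + 2)) →
      g = (X - C b) ^ k *
        (C ((k + 2) * (k + 1) : ℂ) * P + C (k + 2 : ℂ) * (X - C b) * Q + (X - C b) ^ 2 * R) :=
    fun k g e => Polynomial.funext fun w => by
      have := congrFun e w
      rw [apply_shift_pow] at this
      simpa using this
  have n4 := natDegree_le_iff_degree_le.mpr (show g4.degree ≤ _ from d4)
  have n3 := natDegree_le_iff_degree_le.mpr (show g3.degree ≤ _ from d3)
  rw [key (m + 2) g4 e4] at n4
  rw [key (m + 1) g3 e3] at n3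
  replace n4 := natDegree_of_shift_mul (m := 2) (n4.trans (by omega))
  replace n3 := natDegree_of_shift_mul (m := 3) (n3.trans (by omega))
  generalize hU : C (((m + 2 : ℕ) + 2) * ((m + 2 : ℕ) + 1) : ℂ) * P
    + C ((m + 2 : ℕ) + 2 : ℂ) * (X - C b) * Q + (X - C b) ^ 2 * R = U at n4
  generalize hV : C (((m + 1 : ℕ) + 2) * ((m + 1 : ℕ) + 1) : ℂ) * P
    + C ((m + 1 : ℕ) + 2 : ℂ) * (X - C b) * Q + (X - C b) ^ 2 * R = V at n3
  have hQ : (X - C b) ^ 1 * Q = U - V - C (2 * (m + 3) : ℂ) * P := by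
    rw [← hU, ← hV]
    refine Polynomial.funext fun w => ?_
    simp
    ring
  have dQ : ((X - C b) ^ 1 * Q).natDegree ≤ 3 + 1 := by
    rw [hQ]
    exact natDegree_sub_le_of_both (natDegree_sub_le_of_both (by omega) (by omega))
      ((natDegree_C_mul_le _ _).trans hP)
  have hR : (X - C b) ^ 2 * R = U - C ((m + 4) * (m + 3) : ℂ) * P
      - C (m + 4 : ℂ) * ((X - C b) ^ 1 * Q) := by
    rw [← hU]
    refine Polynomial.funext fun w => ?_
    simp
    ring
  refine ⟨natDegree_of_shift_mul dQ, natDegree_of_shift_mul (b := b) (k := 2) ?_⟩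
  rw [hR]
  exact natDegree_sub_le_of_both (natDegree_sub_le_of_both (by omega)
    ((natDegree_C_mul_le _ _).trans hP)) ((natDegree_C_mul_le _ _).trans dQ)

/-! ### Preservation of `ℰ^{a,b}` against preservation of polynomials -/

/-- for `T` with components `p = P.eval, q, r` on `ℂ∖{b}`, where `P` has
degree 4 with distinct roots: (i) if `T` preserves `ℰ^{a,b}` then `p(b) = 0` iff `T`
maps every polynomial to a function agreeing with a polynomial; (ii) if `n ≥ 4`,
`b ≠ 0` and `T` preserves `ℰ^{a,b}ₙ`, then `p(b) = 0` iff `T` preserves `𝒫ₙ`. -/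
theorem stmt17 (P : Polynomial ℂ) (hdeg : P.degree = 4)
    (z : Fin 4 → ℂ) (hinj : Function.Injective z) (hroot : ∀ i, P.eval (z i) = 0)
    (a b : ℂ) (q r : ℂ → ℂ) :
    (SOPreserves P.eval q r {w : ℂ | w ≠ b} (Eab a b) →
      (P.eval b = 0 ↔
        ∀ f : Polynomial ℂ, ∃ g : Polynomial ℂ, ∀ w : ℂ, w ≠ b →
          SOApply P.eval q r f w = g.eval w)) ∧
    (∀ n : ℕ, 4 ≤ n → b ≠ 0 →
      SOPreserves P.eval q r {w : ℂ | w ≠ b} (EabN a b n) →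
      (P.eval b = 0 ↔ SOPreserves P.eval q r {w : ℂ | w ≠ b} (Pn n))) := by
  have hP : P.natDegree ≤ 4 := natDegree_le_iff_degree_le.mpr hdeg.le
  refine ⟨fun H => ?_, fun n hn _ H => ?_⟩
  · rw [coeffs_polynomial_iff fun f hf _ => H f hf]
    constructor
    · rintro ⟨Q, R, h⟩ f
      refine ⟨P * derivative (derivative f) + Q * derivative f + R * f, fun w hw => ?_⟩
      simp [SOApply, h w hw]
    · intro h
      obtain ⟨g0, h0⟩ := h 1
      obtain ⟨g1, h1⟩ := h X
      exact coeffs_of_apply h0 h1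
  · have hdn : ((4 : ℕ) : WithBot ℕ) ≤ (n : ℕ) := by exact_mod_cast hn
    have H4 : ∀ f ∈ Eab a b, f.degree ≤ 4 →
        ∃ g ∈ Eab a b, ∀ w, w ≠ b → SOApply P.eval q r f w = g.eval w := fun f hf hd => by
      obtain ⟨g, hg, e⟩ := H f ⟨hf, hd.trans hdn⟩
      exact ⟨g, hg.1, e⟩
    rw [coeffs_polynomial_iff H4]
    constructor
    · rintro ⟨Q, R, h⟩
      -- Off `b`, the coefficients may be replaced by `Q` and `R`; then `T[f]` is a polynomial
      -- function on all of `ℂ`.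
      have hS : ∀ f, ∀ w, w ≠ b →
          SOApply P.eval q r f w = SOApply P.eval Q.eval R.eval f w := fun f w hw => by
        simp [SOApply, h w hw]
      have hT : ∀ f w, SOApply P.eval Q.eval R.eval f w =
          (P * derivative (derivative f) + Q * derivative f + R * f).eval w := fun f w => by
        simp [SOApply]
      have hE : ∀ f ∈ EabN a b n,
          SOApply P.eval Q.eval R.eval f ∈ (fun g w => eval w g) '' Pn n := fun f hf => by
        obtain ⟨g, hg, e⟩ := H f hf
        refine ⟨g, hg.2, ?_⟩
        have : g = P * derivative (derivative f) + Q * derivative f + R * f :=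
          eq_of_eval_off (b := b) fun w hw => by
            rw [← hT, ← hS f w hw, e w hw]
        funext w
        simp only [hT, this]
      obtain ⟨m, rfl⟩ : ∃ m, n = m + 4 := ⟨n - 4, by omega⟩
      have hpow : ∀ k, k ≤ m + 2 → (X - C b) ^ (k + 2) ∈ EabN a b (m + 4) := fun k hk => by
        refine ⟨shift_pow_mem a b k, natDegree_le_iff_degree_le.mp ?_⟩
        rw [natDegree_pow, natDegree_X_sub_C]
        omega
      obtain ⟨dQ, dR⟩ := degree_bounds hP (hE _ (hpow (m + 2) le_rfl))
        (hE _ (hpow (m + 1) (by omega)))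
      intro f hf
      -- The functional defining `ℰ^{a,b}` takes the value `1` on `X - C b`, so subtracting
      -- `s (X - C b)` projects onto `ℰ^{a,b}`.
      set s := (derivative f).eval b + a * f.eval b with hs
      have hfs : f - C s * (X - C b) ∈ EabN a b (m + 4) := by
        refine ⟨by simp [Eab, hs], natDegree_le_iff_degree_le.mp ?_⟩
        refine natDegree_sub_le_of_both (natDegree_le_iff_degree_le.mpr hf) ?_
        refine (natDegree_C_mul_le _ _).trans ?_
        rw [natDegree_X_sub_C]
        omega
      obtain ⟨g, hg, e⟩ := hE _ hfs
      refine ⟨g + C s * (Q + (X - C b) * R), natDegree_le_iff_degree_le.mp ?_, fun w hw => ?_⟩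
      · refine natDegree_add_le_of_degree_le (natDegree_le_iff_degree_le.mpr hg) ?_
        refine (natDegree_C_mul_le _ _).trans
          (natDegree_add_le_of_degree_le (by omega) (natDegree_mul_le.trans ?_))
        rw [natDegree_X_sub_C]
        omega
      · have e' := congrFun e w
        rw [hS f w hw]
        simp [SOApply] at e' ⊢
        linear_combination -e'
    · intro h
      obtain ⟨g0, -, h0⟩ := h 1 (degree_one_le.trans (by positivity))
      obtain ⟨g1, -, h1⟩ := h X (degree_X_le.trans (by exact_mod_cast (by omega : 1 ≤ n)))
      exact coeffs_of_apply h0 h1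
end
end

section
/- Let p ∈ ℂ[z] be a degree-4 polynomial with distinct roots z₁, z₂, z₃, z₄, let q₀ ∈ ℂ[z] be a polynomial, and let a, b ∈ ℂ satisfy p(b) ≠ 0 and q₀(b) = 2a·p(b). Let T be the second order operator with components p, q, r on ℂ∖({b} ∪ poles of r), where q(z) = q₀(z) + p′(z) − 2p(z)/(z−b) and r is a rational function, and set kᵢ = q₀(zᵢ)/(2p′(zᵢ)). Fix λ ∈ ℂ and let Δ(z) denote the difference between the potential invariant of T and the function −2p(b)/(z−b)² − p′(b)/(z−b) − Σᵢ₌₁⁴ (kᵢ² − 1/16)·p′(zᵢ)/(z−zᵢ) + λ. Then T preserves ℰ^{a,b} if and only if Δ agrees with a polynomial and Δ′(b) = −Σᵢ₌₁⁴ kᵢ²·p′(zᵢ)/(b−zᵢ)². -/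
/-!
Let `p` be the leading coefficient of `T` and `q₀` as in `q = q₀ + p' - 2p/(w - b)`.
Two computations carry the theorem.

*Invariance* (`preserves_iff`). Applying `T` to `(X - b)²` and `1 - a (X - b)`, both in `ℰ^{a,b}`,
shows that `(w - b) r` is a polynomial with value `-2 a p(b)` at `b`; hence
`r = -2 a p(b) / (w - b) + R` with `R` a polynomial. For such `r` the image of any `f ∈ ℰ^{a,b}`
is a polynomial `g`, and a Taylor expansion at `b` gives
`g'(b) + a g(b) = f(b) (R'(b) - a q₀'(b) + a² p'(b))` (`exists_image`). So invariance means exactly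
that `r` has this form with `R'(b) = a q₀'(b) - a² p'(b)`.

*Potential invariant* (`exists_difference`). Off the singular points
`Δ = r + 2 a p(b) / (w - b) + N` with `N` a polynomial, by partial fractions of `q₀² / p` and
`p'² / p` over the simple roots of `p`. Differentiating the decomposition of `q₀² / p` at `b`,
together with the fact that the polynomial part `U` of `p'² / p` satisfies `3 U' = 4 p⁽³⁾`, yields
`N'(b) = -(a q₀'(b) - a² p'(b)) - ∑ kᵢ² p'(zᵢ) / (b - zᵢ)²`.

The correspondence `G = R + N` then matches the two conditions.
-/

open Polynomial

noncomputable section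

/-! ### Polynomial preliminaries -/

/-- Division of a polynomial by `X - b`: the quotient `K` of `F - F(b)` has Taylor coefficients
at `b` shifted by one, expressed here through derivatives at `b`. -/
lemma exists_taylor_quotient (F : Polynomial ℂ) (b : ℂ) : ∃ K : Polynomial ℂ,
    F = C (F.eval b) + (X - C b) * K ∧ K.eval b = (derivative F).eval b ∧
    2 * (derivative K).eval b = (derivative (derivative F)).eval b ∧
    3 * (derivative (derivative K)).eval b = (derivative (derivative (derivative F))).eval b := by
  have h : (X - C b) ∣ F - C (F.eval b) := by
    rw [dvd_iff_isRoot]; simp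
  obtain ⟨K, hK⟩ := h
  have hF : F = C (F.eval b) + (X - C b) * K := by rw [← hK]; ring
  refine ⟨K, hF, ?_, ?_, ?_⟩ <;> generalize F.eval b = c at hF <;> subst hF <;> simp <;> ring

lemma eq_of_eval_eq_off_zeros {F G H : Polynomial ℂ} (hH : H ≠ 0)
    (h : ∀ w, H.eval w ≠ 0 → F.eval w = G.eval w) : F = G := by
  have h0 : H * (F - G) = 0 := by
    apply Polynomial.funext
    intro w
    by_cases hw : H.eval w = 0
    · simp [hw]
    · simp [h w hw]
  exact sub_eq_zero.mp ((mul_eq_zero.mp h0).resolve_left hH)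

/-! ### Partial fractions over the roots of a quartic -/

/-- Partial fractions of `F / P` with polynomial part `V`, via Lagrange interpolation of the
remainder at the roots of `P`. -/
lemma partial_fractions {P : Polynomial ℂ} (hdeg : P.degree = 4) {z : Fin 4 → ℂ}
    (hinj : Function.Injective z) (hroot : ∀ i, P.eval (z i) = 0) {F V : Polynomial ℂ}
    (hV : (F - P * V).degree < 4) {w : ℂ} (hw : P.eval w ≠ 0) :
    F.eval w / P.eval w =
      V.eval w + ∑ i, F.eval (z i) / ((derivative P).eval (z i) * (w - z i)) := by
  have hL : F - P * V = Lagrange.interpolate Finset.univ z (fun i => F.eval (z i)) := by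
    apply Lagrange.eq_interpolate_of_eval_eq _ hinj.injOn
    · simpa using hV
    · intro i _; simp [hroot i]
  obtain ⟨c, hP⟩ : ∃ c : ℂ, P = C c * Lagrange.nodal Finset.univ z := by
    refine ⟨P.leadingCoeff, ?_⟩
    have hdvd : Lagrange.nodal Finset.univ z ∣ P := by
      unfold Lagrange.nodal
      apply Finset.prod_dvd_of_coprime
      · intro i _ j _ hij
        exact isCoprime_X_sub_C_of_isUnit_sub (sub_ne_zero.mpr (hinj.ne hij)).isUnit
      · intro i _
        rw [dvd_iff_isRoot]; exact hroot i
    exact eq_leadingCoeff_mul_of_monic_of_dvd_of_natDegree_le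
      (Lagrange.nodal_monic (s := Finset.univ) (v := z)) hdvd
      (by rw [Lagrange.natDegree_nodal, natDegree_eq_of_degree_eq_some hdeg]; simp)
  have hne : ∀ i, w ≠ z i := by rintro i rfl; exact hw (hroot i)
  have hev : F.eval w = P.eval w * V.eval w + (F - P * V).eval w := by simp
  have hnod : (Lagrange.nodal Finset.univ z).eval w ≠ 0 := by
    intro h; apply hw; rw [hP]; simp [h]
  rw [hev, hL, Lagrange.eval_interpolate_not_at_node _ (fun i _ => hne i), add_div,
    mul_div_cancel_left₀ _ hw]
  congr 1
  have : P.eval w = c * (Lagrange.nodal Finset.univ z).eval w := by rw [hP]; simp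
  rw [this, mul_comm c, mul_div_mul_left _ _ hnod, Finset.sum_div]
  refine Finset.sum_congr rfl fun i _ => ?_
  rw [Lagrange.nodalWeight_eq_eval_derivative_nodal (Finset.mem_univ i)]
  have hd : (derivative P).eval (z i) =
      c * (derivative (Lagrange.nodal Finset.univ z)).eval (z i) := by
    rw [hP]; simp
  rw [hd]
  simp only [div_eq_mul_inv, mul_inv]
  ring

/-- For a quartic `P`, the polynomial part `U` of the square of the derivative over `P`
satisfies `3 U' = 4 P⁽³⁾`. -/
lemma exists_quotient_derivative_sq {P : Polynomial ℂ} (hdeg : P.degree = 4) (b : ℂ) :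
    ∃ U : Polynomial ℂ, (derivative P ^ 2 - P * U).degree < 4 ∧
      3 * (derivative U).eval b = 4 * (derivative (derivative (derivative P))).eval b := by
  have hn : P.natDegree = 4 := natDegree_eq_of_degree_eq_some hdeg
  have h4 : P.coeff 4 ≠ 0 := by
    rw [← hn, Ne, ← leadingCoeff, leadingCoeff_eq_zero]; rintro rfl; simp at hdeg
  have hP := P.as_sum_range_C_mul_X_pow
  rw [hn] at hP
  simp only [Finset.sum_range_succ, Finset.sum_range_zero, zero_add, pow_zero, mul_one,
    pow_one] at hP
  generalize P.coeff 0 = c0 at hP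
  generalize P.coeff 1 = c1 at hP
  generalize P.coeff 2 = c2 at hP
  generalize P.coeff 3 = c3 at hP
  generalize P.coeff 4 = c4 at hP h4
  -- The coefficients of the quotient and of the cubic remainder come from long division.
  refine ⟨C (16 * c4) * X ^ 2 + C (8 * c3) * X + C (c3 ^ 2 / c4), ?_, ?_⟩
  · have : derivative P ^ 2 - P * (C (16 * c4) * X ^ 2 + C (8 * c3) * X + C (c3 ^ 2 / c4)) =
        C (8 * c4 * c1 + 12 * c3 * c2 - 16 * c4 * c1 - 8 * c3 * c2 - c3 ^ 3 / c4) * X ^ 3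
        + C (4 * c2 ^ 2 + 6 * c3 * c1 - 16 * c4 * c0 - 8 * c3 * c1 - c2 * c3 ^ 2 / c4) * X ^ 2
        + C (4 * c2 * c1 - 8 * c3 * c0 - c1 * c3 ^ 2 / c4) * X
        + C (c1 ^ 2 - c0 * c3 ^ 2 / c4) := by
      rw [hP]
      apply Polynomial.funext
      intro w
      simp
      field_simp
      ring
    rw [this]
    refine lt_of_le_of_lt (b := ((3 : ℕ) : WithBot ℕ)) ?_ (by norm_num)
    compute_degree
    exact le_rfl
  · rw [hP]; simp; ring

/-- Derivative at `b` of a polynomial part `V` of `F / P`, by differentiating the partial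
fraction decomposition. -/
lemma eval_derivative_quotient {P : Polynomial ℂ} (hdeg : P.degree = 4) {z : Fin 4 → ℂ}
    (hinj : Function.Injective z) (hroot : ∀ i, P.eval (z i) = 0) {F V : Polynomial ℂ}
    (hV : (F - P * V).degree < 4) {b : ℂ} (hb : P.eval b ≠ 0) :
    (derivative V).eval b =
      ((derivative F).eval b * P.eval b - F.eval b * (derivative P).eval b) / P.eval b ^ 2
      + ∑ i, F.eval (z i) / (derivative P).eval (z i) / (b - z i) ^ 2 := by
  have hne : ∀ i, b - z i ≠ 0 := by
    intro i h; rw [sub_eq_zero.mp h] at hb; exact hb (hroot i)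
  have h1 := (F.hasDerivAt b).fun_div (P.hasDerivAt b) hb
  have h2 : HasDerivAt (fun w => V.eval w
      + ∑ i, F.eval (z i) / (derivative P).eval (z i) * (w - z i)⁻¹)
      ((derivative V).eval b
        + ∑ i, F.eval (z i) / (derivative P).eval (z i) * (-1 / (b - z i) ^ 2)) b := by
    refine (V.hasDerivAt b).fun_add (HasDerivAt.fun_sum fun i _ => ?_)
    exact (((hasDerivAt_id b).sub_const (z i)).fun_inv (hne i)).const_mul _
  have hev : (fun w => V.eval w
      + ∑ i, F.eval (z i) / (derivative P).eval (z i) * (w - z i)⁻¹) =ᶠ[nhds b]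
      fun w => F.eval w / P.eval w := by
    filter_upwards [P.continuous.continuousAt.eventually_ne hb] with w hw
    rw [partial_fractions hdeg hinj hroot hV hw]
    congr 1
    refine Finset.sum_congr rfl fun i _ => ?_
    rw [← div_eq_mul_inv, div_div]
  have h3 := (h2.congr_of_eventuallyEq hev.symm).unique h1
  rw [← h3, add_assoc, ← Finset.sum_add_distrib, Finset.sum_eq_zero, add_zero]
  intro i _
  ring

/-! ### Operators preserving `ℰ^{a,b}` -/

/-- Analysis at `b` of `T[f]` for `f ∈ ℰ^{a,b}`, when `r = -2 a p(b) / (w - b) + R`: the poles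
cancel, and the resulting polynomial satisfies the defining condition of `ℰ^{a,b}` up to a
multiple of `f(b)`. -/
lemma exists_image (P Q0 R f : Polynomial ℂ) (a b : ℂ) (hq0b : Q0.eval b = 2 * a * P.eval b)
    (hf : f ∈ Eab a b) : ∃ g : Polynomial ℂ,
      (∀ w, w ≠ b → P.eval w * (derivative (derivative f)).eval w
        + (Q0.eval w + (derivative P).eval w - 2 * P.eval w / (w - b)) * (derivative f).eval w
        + (-(2 * a * P.eval b) / (w - b) + R.eval w) * f.eval w = g.eval w) ∧
      (derivative g).eval b + a * g.eval b = f.eval b *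
        ((derivative R).eval b - (a * (derivative Q0).eval b - a ^ 2 * (derivative P).eval b)) := by
  have hf' : (derivative f).eval b + a * f.eval b = 0 := hf
  have hf1 : (derivative f).eval b = - (a * f.eval b) := by linear_combination hf'
  -- The polar part of `T[f]` is `-2 / (w - b)` times this polynomial, which vanishes at `b`.
  obtain ⟨K, hK, hK0, hK1, -⟩ :=
    exists_taylor_quotient (P * derivative f + C (a * P.eval b) * f) b
  refine ⟨P * derivative (derivative f) + (Q0 + derivative P) * derivative f - C 2 * K + R * f,
    ?_, ?_⟩
  · intro w hw
    have hw' : w - b ≠ 0 := sub_ne_zero.mpr hw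
    have h := congrArg (eval w) hK
    simp only [eval_add, eval_mul, eval_C, eval_sub, eval_X] at h ⊢
    rw [hf1] at h
    field_simp
    linear_combination (-2) * h
  · simp only [eval_add, eval_mul, eval_C, eval_sub, derivative_add, derivative_mul,
      derivative_C, derivative_sub, zero_mul, zero_add] at hK0 hK1 ⊢
    rw [hK0, hq0b]
    rw [hf1] at hK1 ⊢
    linear_combination -hK1

/-- `T` preserves `ℰ^{a,b}` exactly when `r` has no poles except a simple one at `b` (possibly
removable) with residue `-2 a p(b)`, and its regular part has a prescribed derivative at `b`. -/
lemma preserves_iff (P Q0 B : Polynomial ℂ) (a b : ℂ)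
    (hq0b : Q0.eval b = 2 * a * P.eval b) (hB : B ≠ 0) (q r : ℂ → ℂ)
    (hq : ∀ w : ℂ, q w = Q0.eval w + (derivative P).eval w - 2 * P.eval w / (w - b)) :
    SOPreserves P.eval q r {w : ℂ | w ≠ b ∧ B.eval w ≠ 0} (Eab a b) ↔
      ∃ R : Polynomial ℂ,
        (∀ w, w ≠ b → B.eval w ≠ 0 → r w = -(2 * a * P.eval b) / (w - b) + R.eval w) ∧
        (derivative R).eval b = a * (derivative Q0).eval b - a ^ 2 * (derivative P).eval b := by
  have hX : (X - C b) * B ≠ 0 := mul_ne_zero (X_sub_C_ne_zero b) hB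
  have hXB : ∀ w, ((X - C b) * B).eval w ≠ 0 → w ≠ b ∧ B.eval w ≠ 0 := by
    intro w hw
    simp only [eval_mul, eval_sub, eval_X, eval_C] at hw
    exact ⟨sub_ne_zero.mp (left_ne_zero_of_mul hw), right_ne_zero_of_mul hw⟩
  constructor
  · intro h
    have hmem1 : (1 - C a * (X - C b) : Polynomial ℂ) ∈ Eab a b := by simp [Eab]
    have hmem2 : ((X - C b) ^ 2 : Polynomial ℂ) ∈ Eab a b := by simp [Eab, derivative_pow]
    obtain ⟨g1, hg1E, hg1⟩ := h _ hmem1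
    obtain ⟨g2, -, hg2⟩ := h _ hmem2
    -- `(w - b) r` is a polynomial, since `X - b = (X - b)(1 - a (X - b)) + a (X - b)²`.
    let H : Polynomial ℂ := (X - C b) * (g1 + C a * (Q0 + derivative P)) - C (2 * a) * P
      + C a * (g2 - C 2 * P - C 2 * (X - C b) * (Q0 + derivative P) + C 4 * P)
    have hH : ∀ w, w ≠ b → B.eval w ≠ 0 → H.eval w = (w - b) * r w := by
      intro w hw hBw
      have hw' : w - b ≠ 0 := sub_ne_zero.mpr hw
      have e1 := hg1 w ⟨hw, hBw⟩
      have e2 := hg2 w ⟨hw, hBw⟩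
      simp only [SOApply, hq] at e1 e2
      simp [derivative_pow] at e1 e2
      simp only [H, eval_add, eval_mul, eval_C, eval_sub, eval_X]
      rw [← e1, ← e2]
      field_simp
      ring
    have hHb : H.eval b = -(2 * a * P.eval b) := by
      have hpoly : (X - C b) * g1 = -C a * (X - C b) * (Q0 + derivative P) + C (2 * a) * P
          + H * (1 - C a * (X - C b)) := by
        refine eq_of_eval_eq_off_zeros hX fun w hw => ?_
        obtain ⟨hw, hBw⟩ := hXB w hw
        have hw' : w - b ≠ 0 := sub_ne_zero.mpr hw
        have e1 := hg1 w ⟨hw, hBw⟩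
        simp only [SOApply, hq] at e1
        simp at e1
        simp only [eval_add, eval_mul, eval_C, eval_sub, eval_X, eval_neg, eval_one, hH w hw hBw]
        rw [← e1]
        field_simp
        ring
      have := congrArg (eval b) hpoly
      simp only [eval_add, eval_mul, eval_C, eval_sub, eval_X, eval_neg, eval_one] at this
      linear_combination -this
    obtain ⟨R, hR, -⟩ := exists_taylor_quotient H b
    rw [hHb] at hR
    have hrR : ∀ w, w ≠ b → B.eval w ≠ 0 →
        r w = -(2 * a * P.eval b) / (w - b) + R.eval w := by
      intro w hw hBw
      have hw' : w - b ≠ 0 := sub_ne_zero.mpr hw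
      have e := hH w hw hBw
      rw [hR] at e
      simp only [eval_add, eval_mul, eval_C, eval_sub, eval_X] at e
      field_simp
      linear_combination -e
    refine ⟨R, hrR, ?_⟩
    obtain ⟨g, hg, hgE⟩ := exists_image P Q0 R _ a b hq0b hmem1
    have hgg : g = g1 := by
      refine eq_of_eval_eq_off_zeros hX fun w hw => ?_
      obtain ⟨hw, hBw⟩ := hXB w hw
      rw [← hg w hw, ← hg1 w ⟨hw, hBw⟩, SOApply, hq, hrR w hw hBw]
    have h0 : (derivative g1).eval b + a * g1.eval b = 0 := hg1E
    rw [hgg, h0] at hgE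
    simp only [eval_mul, eval_C, eval_sub, eval_X, eval_one] at hgE
    linear_combination -hgE
  · rintro ⟨R, hrR, hR⟩ f hf
    obtain ⟨g, hg, hgE⟩ := exists_image P Q0 R f a b hq0b hf
    refine ⟨g, ?_, ?_⟩
    · rw [hR, sub_self, mul_zero] at hgE
      exact hgE
    · rintro w ⟨hw, hBw⟩
      rw [← hg w hw, SOApply, hq, hrR w hw hBw]

/-! ### The potential invariant -/

lemma potentialInv_eq (P Q0 : Polynomial ℂ) (b : ℂ) (q r : ℂ → ℂ)
    (hq : ∀ w : ℂ, q w = Q0.eval w + (derivative P).eval w - 2 * P.eval w / (w - b))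
    {w : ℂ} (hw : w ≠ b) (hP : P.eval w ≠ 0) :
    potentialInv P.eval q r w = r w - (derivative Q0).eval w / 2
      - (derivative (derivative P)).eval w / 4 + (Q0.eval w + (derivative P).eval w) / (w - b)
      - 2 * P.eval w / (w - b) ^ 2 - Q0.eval w ^ 2 / P.eval w / 4
      + (derivative P).eval w ^ 2 / P.eval w / 16 := by
  have hw' : w - b ≠ 0 := sub_ne_zero.mpr hw
  have hd1 : deriv P.eval = (derivative P).eval := by
    funext x; exact P.deriv
  have hd2 : deriv (derivative P).eval w = (derivative (derivative P)).eval w :=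
    (derivative P).deriv
  have hdq : deriv q w = (derivative Q0).eval w + (derivative (derivative P)).eval w
      - (2 * (derivative P).eval w * (w - b) - 2 * P.eval w * 1) / (w - b) ^ 2 := by
    have hq' : q = fun w => Q0.eval w + (derivative P).eval w - 2 * P.eval w / (w - b) :=
      funext hq
    rw [hq']
    exact (((Q0.hasDerivAt w).fun_add ((derivative P).hasDerivAt w)).fun_sub
      (((P.hasDerivAt w).const_mul 2).fun_div ((hasDerivAt_id w).sub_const b) hw')).deriv
  rw [potentialInv, hd1, hd2, hdq, hq]
  field_simp
  ring

/-- The potential invariant minus the prescribed principal parts equals `r + 2 a p(b) / (w - b)`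
plus a polynomial `N` whose derivative at `b` is explicit. -/
lemma exists_difference {P : Polynomial ℂ} (hdeg : P.degree = 4)
    {z : Fin 4 → ℂ} (hinj : Function.Injective z) (hroot : ∀ i, P.eval (z i) = 0)
    (Q0 : Polynomial ℂ) {a b : ℂ} (hb : P.eval b ≠ 0)
    (hq0b : Q0.eval b = 2 * a * P.eval b) (q r : ℂ → ℂ)
    (hq : ∀ w : ℂ, q w = Q0.eval w + (derivative P).eval w - 2 * P.eval w / (w - b))
    (k : Fin 4 → ℂ) (hk : ∀ i, k i = Q0.eval (z i) / (2 * (derivative P).eval (z i)))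
    (lam : ℂ) : ∃ N : Polynomial ℂ,
      (∀ w, w ≠ b → P.eval w ≠ 0 → potentialInv P.eval q r w -
        (-(2 * P.eval b) / (w - b) ^ 2 - (derivative P).eval b / (w - b)
          - (∑ i, (k i ^ 2 - 1 / 16) * (derivative P).eval (z i) / (w - z i))
          + lam) = r w + 2 * a * P.eval b / (w - b) + N.eval w) ∧
      (derivative N).eval b = -(a * (derivative Q0).eval b - a ^ 2 * (derivative P).eval b)
        - ∑ i, k i ^ 2 * (derivative P).eval (z i) / (b - z i) ^ 2 := by
  have hP0 : P ≠ 0 := by rintro rfl; simp at hb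
  obtain ⟨U, hU, hU'⟩ := exists_quotient_derivative_sq hdeg b
  obtain ⟨V, hV⟩ : ∃ V : Polynomial ℂ, (Q0 ^ 2 - P * V).degree < 4 := by
    refine ⟨Q0 ^ 2 / P, ?_⟩
    rw [← EuclideanDomain.mod_eq_sub_mul_div, ← hdeg]
    exact EuclideanDomain.mod_lt _ hP0
  have hV' := eval_derivative_quotient hdeg hinj hroot hV hb
  obtain ⟨m, hm, -, hm1, -⟩ := exists_taylor_quotient Q0 b
  obtain ⟨d, hd, -, hd1, -⟩ := exists_taylor_quotient (derivative P) b
  obtain ⟨s, hs, hs0, hs1, hs2⟩ := exists_taylor_quotient P b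
  obtain ⟨u, hu, -, hu1, -⟩ := exists_taylor_quotient s b
  have hkk : ∀ i, Q0.eval (z i) ^ 2 / (derivative P).eval (z i)
      = 4 * (k i ^ 2 * (derivative P).eval (z i)) := by
    intro i
    rw [hk i]
    -- Both sides are `0` by convention if `P'(zᵢ) = 0`, so simplicity of the root is not needed.
    by_cases h0 : (derivative P).eval (z i) = 0
    · simp [h0]
    · field_simp
      ring
  refine ⟨m + d - C 2 * u - C (1 / 2) * derivative Q0 - C (1 / 4) * derivative (derivative P)
    - C (1 / 4) * V + C (1 / 16) * U - C lam, ?_, ?_⟩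
  · intro w hw hPw
    have hw' : w - b ≠ 0 := sub_ne_zero.mpr hw
    have e1 := partial_fractions hdeg hinj hroot hV hPw
    have e2 := partial_fractions hdeg hinj hroot hU hPw
    have s1 : ∑ i, (Q0 ^ 2).eval (z i) / ((derivative P).eval (z i) * (w - z i))
        = 4 * ∑ i, k i ^ 2 * (derivative P).eval (z i) / (w - z i) := by
      rw [Finset.mul_sum]
      refine Finset.sum_congr rfl fun i _ => ?_
      rw [eval_pow, ← div_div, hkk]
      ring
    have s2 : ∑ i, (derivative P ^ 2).eval (z i) / ((derivative P).eval (z i) * (w - z i))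
        = ∑ i, (derivative P).eval (z i) / (w - z i) := by
      refine Finset.sum_congr rfl fun i _ => ?_
      rw [eval_pow, ← div_div]
      congr 1
      by_cases h0 : (derivative P).eval (z i) = 0
      · simp [h0]
      · field_simp
    have s3 : ∑ i, (k i ^ 2 - 1 / 16) * (derivative P).eval (z i) / (w - z i)
        = ∑ i, k i ^ 2 * (derivative P).eval (z i) / (w - z i)
          - (∑ i, (derivative P).eval (z i) / (w - z i)) / 16 := by
      rw [Finset.sum_div, ← Finset.sum_sub_distrib]
      refine Finset.sum_congr rfl fun i _ => ?_
      ring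
    rw [s1, eval_pow] at e1
    rw [s2, eval_pow] at e2
    rw [potentialInv_eq P Q0 b q r hq hw hPw, e1, e2, s3]
    have f1 := congrArg (eval w) hm
    have f2 := congrArg (eval w) hd
    have f3 := congrArg (eval w) hs
    have f4 := congrArg (eval w) hu
    simp only [eval_add, eval_mul, eval_C, eval_sub, eval_X] at f1 f2 f3 f4 ⊢
    rw [hs0] at f4
    rw [f4] at f3
    have g1 : (Q0.eval w + (derivative P).eval w) / (w - b)
        = (2 * a * P.eval b + (derivative P).eval b) / (w - b) + m.eval w + d.eval w := by
      rw [f1, f2, hq0b]; field_simp; ring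
    have g2 : 2 * P.eval w / (w - b) ^ 2 = 2 * P.eval b / (w - b) ^ 2
        + 2 * (derivative P).eval b / (w - b) + 2 * u.eval w := by
      rw [f3]; field_simp; ring
    rw [g1, g2]
    ring
  · have hV2 : (derivative V).eval b = 4 * (a * (derivative Q0).eval b
        - a ^ 2 * (derivative P).eval b)
        + 4 * ∑ i, k i ^ 2 * (derivative P).eval (z i) / (b - z i) ^ 2 := by
      rw [hV', Finset.mul_sum]
      congr 1
      · simp [derivative_pow, hq0b]
        field_simp
        ring
      · refine Finset.sum_congr rfl fun i _ => ?_
        rw [eval_pow, hkk]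
        ring
    simp only [derivative_add, derivative_sub, derivative_mul, derivative_C, zero_mul, zero_add,
      eval_add, eval_sub, eval_mul, eval_C, eval_zero]
    rw [hV2]
    linear_combination hm1 / 2 + hd1 / 2 - hu1 - hs2 / 3 + hU' / 48

/-- with `p` of degree 4 with distinct roots `zᵢ`, a polynomial `q₀`,
constants `a, b` with `p(b) ≠ 0` and `q₀(b) = 2a·p(b)`, components
`q = q₀ + p′ − 2p/(z−b)` and `r = A/B` (a rational function in lowest terms), and
`kᵢ = q₀(zᵢ)/(2p′(zᵢ))`: letting `Δ` be the difference between the potential invariant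
of `T` and `−2p(b)/(z−b)² − p′(b)/(z−b) − Σᵢ(kᵢ²−1/16)p′(zᵢ)/(z−zᵢ) + λ`, the operator
`T` preserves `ℰ^{a,b}` iff `Δ` agrees with a polynomial whose derivative at `b` equals
`−Σᵢ kᵢ²·p′(zᵢ)/(b−zᵢ)²`. -/
theorem stmt19 (P : Polynomial ℂ) (hdeg : P.degree = 4)
    (z : Fin 4 → ℂ) (hinj : Function.Injective z) (hroot : ∀ i, P.eval (z i) = 0)
    (Q0 : Polynomial ℂ) (a b : ℂ) (hb : P.eval b ≠ 0)
    (hq0b : Q0.eval b = 2 * a * P.eval b)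
    (A B : Polynomial ℂ) (hB : B ≠ 0) (hcop : IsCoprime A B)
    (q r : ℂ → ℂ)
    (hq : ∀ w : ℂ,
      q w = Q0.eval w + (Polynomial.derivative P).eval w - 2 * P.eval w / (w - b))
    (hr : ∀ w : ℂ, r w = A.eval w / B.eval w)
    (k : Fin 4 → ℂ)
    (hk : ∀ i, k i = Q0.eval (z i) / (2 * (Polynomial.derivative P).eval (z i)))
    (lam : ℂ) (Δ : ℂ → ℂ)
    (hΔ : ∀ w : ℂ, Δ w =
      potentialInv P.eval q r w -
        (-(2 * P.eval b) / (w - b) ^ 2 - (Polynomial.derivative P).eval b / (w - b)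
          - (∑ i, (k i ^ 2 - 1 / 16) * (Polynomial.derivative P).eval (z i) / (w - z i))
          + lam)) :
    SOPreserves P.eval q r {w : ℂ | w ≠ b ∧ B.eval w ≠ 0} (Eab a b) ↔
      ∃ G : Polynomial ℂ,
        (∀ w : ℂ, w ≠ b → B.eval w ≠ 0 → P.eval w ≠ 0 → (∀ i, w ≠ z i) →
          Δ w = G.eval w) ∧
        (Polynomial.derivative G).eval b =
          -(∑ i, k i ^ 2 * (Polynomial.derivative P).eval (z i) / (b - z i) ^ 2) := by
  have hP0 : P ≠ 0 := by rintro rfl; simp at hb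
  obtain ⟨N, hN, hN'⟩ := exists_difference hdeg hinj hroot Q0 hb hq0b q r hq k hk lam
  rw [preserves_iff P Q0 B a b hq0b hB q r hq]
  constructor
  · rintro ⟨R, hR, hR'⟩
    refine ⟨R + N, ?_, ?_⟩
    · intro w hw hBw hPw _
      rw [hΔ, hN w hw hPw, hR w hw hBw, eval_add]
      ring
    · rw [derivative_add, eval_add, hR', hN']
      ring
  · rintro ⟨G, hG, hG'⟩
    refine ⟨G - N, ?_, ?_⟩
    · -- Clearing denominators extends the identity for `r` to the roots of `P`.
      have hpoly : A * (X - C b) =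
          B * (-C (2 * a * P.eval b) + (X - C b) * (G - N)) := by
        refine eq_of_eval_eq_off_zeros
          (mul_ne_zero (mul_ne_zero (X_sub_C_ne_zero b) hB) hP0) fun w hw => ?_
        simp only [eval_mul, eval_sub, eval_X, eval_C] at hw
        have hPw : P.eval w ≠ 0 := right_ne_zero_of_mul hw
        have hBw : B.eval w ≠ 0 := right_ne_zero_of_mul (left_ne_zero_of_mul hw)
        have hw' : w - b ≠ 0 := left_ne_zero_of_mul (left_ne_zero_of_mul hw)
        have hwb : w ≠ b := sub_ne_zero.mp hw'
        have e := hG w hwb hBw hPw (by rintro i rfl; exact hPw (hroot i))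
        rw [hΔ, hN w hwb hPw, hr] at e
        simp only [eval_mul, eval_sub, eval_X, eval_C, eval_add, eval_neg]
        rw [← e]
        field_simp
        ring
      intro w hw hBw
      have hw' : w - b ≠ 0 := sub_ne_zero.mpr hw
      have e := congrArg (eval w) hpoly
      simp only [eval_mul, eval_sub, eval_X, eval_C, eval_add, eval_neg] at e
      rw [hr, eval_sub]
      field_simp
      linear_combination e
    · rw [derivative_sub, eval_sub, hG', hN']
      ring
end
end
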